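/- Let K be a number field and h ≥ 2 an integer. Then ∑_{𝔪 ∈ S_h(x)} ω(𝔪) = (κ_K/ζ_K(h))·x·log log x + (κ_K·ℭ₁/ζ_K(h))·x + O_h(x/log x) as the real number x → ∞, where the implied constant depends only on h and K. -/

import Mathlib

open Filter Topology Asymptotics NumberField

noncomputable section

/-- The number of distinct (nonzero) prime ideals dividing the ideal `I`. -/
def omegaK {K : Type*} [Field K] [NumberField K] (I : Ideal (𝓞 K)) : ℕ :=
  {p : Ideal (𝓞 K) | p.IsPrime ∧ p ≠ ⊥ ∧ p ∣ I}.ncard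

/-- The ideal `I` is `h`-free: no prime ideal divides it to order `h`. -/
def HFreeI {K : Type*} [Field K] [NumberField K] (h : ℕ) (I : Ideal (𝓞 K)) : Prop :=
  ∀ p : Ideal (𝓞 K), p.IsPrime → p ≠ ⊥ → ¬ p ^ h ∣ I

/-- The ideal `I` is `h`-full: every prime ideal dividing it divides it to
order at least `h`. -/
def HFullI {K : Type*} [Field K] [NumberField K] (h : ℕ) (I : Ideal (𝓞 K)) : Prop :=
  ∀ p : Ideal (𝓞 K), p.IsPrime → p ≠ ⊥ → p ∣ I → p ^ h ∣ I

/-- The ideal-counting constant `κ_K = 2^{r₁} (2π)^{r₂} h_K R_K / (w_K √|d_K|)`. -/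
def kappaK (K : Type*) [Field K] [NumberField K] : ℝ :=
  (2 ^ InfinitePlace.nrRealPlaces K * (2 * Real.pi) ^ InfinitePlace.nrComplexPlaces K *
      (classNumber K) * Units.regulator K) /
    ((Units.torsionOrder K : ℕ) * Real.sqrt |(discr K : ℝ)|)

/-- The Dedekind zeta value `ζ_K(h) = ∑_{𝔞 ≠ 0} N(𝔞)^{-h}`. -/
def zetaK (K : Type*) [Field K] [NumberField K] (h : ℕ) : ℝ :=
  ∑' I : {I : Ideal (𝓞 K) // I ≠ ⊥}, 1 / (Ideal.absNorm I.val : ℝ) ^ h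

/-- `A` is the Mertens constant `𝔄` for the prime ideals of `K`:
`𝔄 = lim (∑_{N(𝔭) ≤ x} 1/N(𝔭) − log log x)`. -/
def MertensK (K : Type*) [Field K] [NumberField K] (A : ℝ) : Prop :=
  Tendsto (fun x : ℝ =>
      (∑ᶠ p ∈ {p : Ideal (𝓞 K) | p.IsPrime ∧ p ≠ ⊥ ∧ (Ideal.absNorm p : ℝ) ≤ x},
        1 / (Ideal.absNorm p : ℝ)) - Real.log (Real.log x))
    atTop (𝓝 A)

/-- The constant `𝔅 = -π²/6`. -/
def BconstK : ℝ := -(Real.pi ^ 2) / 6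

/-- The constant `ℭ₁` for `K`, given the Mertens constant `A`. -/
def C1K (K : Type*) [Field K] [NumberField K] (h : ℕ) (A : ℝ) : ℝ :=
  A - ∑' p : {p : Ideal (𝓞 K) // p.IsPrime ∧ p ≠ ⊥},
    ((Ideal.absNorm p.val : ℝ) - 1) /
      ((Ideal.absNorm p.val : ℝ) * ((Ideal.absNorm p.val : ℝ) ^ h - 1))

/-- The constant `ℭ₂` for `K`, given the Mertens constant `A`. -/
def C2K (K : Type*) [Field K] [NumberField K] (h : ℕ) (A : ℝ) : ℝ :=
  C1K K h A ^ 2 + C1K K h A + BconstK -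
    ∑' p : {p : Ideal (𝓞 K) // p.IsPrime ∧ p ≠ ⊥},
      (((Ideal.absNorm p.val : ℝ) ^ (h - 1) - 1) /
        ((Ideal.absNorm p.val : ℝ) ^ h - 1)) ^ 2

/-- The constant `γ_h` for `K`. -/
def gammaK (K : Type*) [Field K] [NumberField K] (h : ℕ) : ℝ :=
  ∏' p : {p : Ideal (𝓞 K) // p.IsPrime ∧ p ≠ ⊥},
    (1 + ((Ideal.absNorm p.val : ℝ) - (Ideal.absNorm p.val : ℝ) ^ (1 / (h : ℝ))) /
      ((Ideal.absNorm p.val : ℝ) ^ 2 *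
        ((Ideal.absNorm p.val : ℝ) ^ (1 / (h : ℝ)) - 1)))

/-- The convergent series `𝔏_h(r)` for `K`. -/
def LhK (K : Type*) [Field K] [NumberField K] (h : ℕ) (r : ℝ) : ℝ :=
  ∑' p : {p : Ideal (𝓞 K) // p.IsPrime ∧ p ≠ ⊥},
    1 / ((Ideal.absNorm p.val : ℝ) ^ (r / (h : ℝ) - 1) *
      ((Ideal.absNorm p.val : ℝ) -
        (Ideal.absNorm p.val : ℝ) ^ (1 - 1 / (h : ℝ)) + 1))

/-- The constant `𝔇₁` for `K`, given the Mertens constant `A`. -/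
def D1K (K : Type*) [Field K] [NumberField K] (h : ℕ) (A : ℝ) : ℝ :=
  A - Real.log (h : ℝ) + LhK K h ((h : ℝ) + 1) - LhK K h (2 * (h : ℝ))

/-- The constant `𝔇₂` for `K`, given the Mertens constant `A`. -/
def D2K (K : Type*) [Field K] [NumberField K] (h : ℕ) (A : ℝ) : ℝ :=
  D1K K h A ^ 2 + D1K K h A + BconstK -
    ∑' p : {p : Ideal (𝓞 K) // p.IsPrime ∧ p ≠ ⊥},
      ((Ideal.absNorm p.val : ℝ) -
        (Ideal.absNorm p.val : ℝ) ^ (1 - 1 / (h : ℝ)) + 1)⁻¹ ^ 2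

noncomputable section

lemma lattice_scale {ι : Type*} [Fintype ι] [DecidableEq ι] (R : ℝ) (hR : 0 ≤ R) :
    ∃ C : ℝ, 0 ≤ C ∧ ∀ (H : (ι → ℝ) → ℝ) (L : ℝ), 0 ≤ L → (∀ s t, |H s - H t| ≤ L * ‖s - t‖) →
      (∀ t, H t ≠ 0 → ‖t‖ ≤ R) → ∀ T : ℝ, 1 ≤ T → ∀ m : ℕ, 1 ≤ m →
      |∑' k : ι → ℤ, H (fun i => (k i : ℝ) / (m * T))
        - (m : ℝ) ^ Fintype.card ι * ∑' k : ι → ℤ, H (fun i => (k i : ℝ) / T)|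
      ≤ C * L * ((m : ℝ) ^ Fintype.card ι * (T ^ Fintype.card ι / T)) := by
  refine ⟨(2 * R + 5) ^ Fintype.card ι, by positivity, ?_⟩
  intro H L hL hlip hsupp T hT m hm
  have hm0 : NeZero m := ⟨by omega⟩
  have hmR : (1 : ℝ) ≤ m := by exact_mod_cast hm
  set M : ℕ := ⌈(R + 1) * T⌉₊ with hM
  have hM1 : (R + 1) * T ≤ M := Nat.le_ceil _
  have hM2 : (M : ℝ) < (R + 1) * T + 1 := Nat.ceil_lt_add_one (by positivity)
  let B : Finset (ι → ℤ) := Fintype.piFinset fun _ => Finset.Icc (-(M : ℤ)) M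
  have hB : (B.card : ℝ) ≤ (2 * R + 5) ^ Fintype.card ι * T ^ Fintype.card ι := by
    have h1 : B.card = (2 * M + 1) ^ Fintype.card ι := by
      simp only [B, Fintype.card_piFinset, Int.card_Icc, Finset.prod_const, Finset.card_univ]
      congr 1
      omega
    rw [h1, ← mul_pow]
    push_cast
    apply pow_le_pow_left₀ (by positivity)
    nlinarith
  have memB : ∀ q : ι → ℤ, (∀ i, |(q i : ℝ)| ≤ (R + 1) * T) → q ∈ B := by
    intro q hq
    simp only [B, Fintype.mem_piFinset, Finset.mem_Icc]
    intro i
    have h1 := abs_le.mp ((hq i).trans hM1)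
    constructor
    · exact_mod_cast h1.1
    · exact_mod_cast h1.2
  let e : (ι → ℤ) ≃ (ι → ℤ) × (ι → Fin m) :=
    ((Equiv.refl ι).arrowCongr (Int.divModEquiv m)).trans (Equiv.arrowProdEquivProdArrow ι (fun _ => ℤ) (fun _ => Fin m))
  have he : ∀ (q : ι → ℤ) (r : ι → Fin m) i, e.symm (q, r) i = (r i : ℤ) + m * q i := by
    intro q r i
    simp [e, Equiv.arrowProdEquivProdArrow, Int.divModEquiv]
    ring
  have h1 : ∑' k : ι → ℤ, H (fun i => (k i : ℝ) / (m * T)) =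
      ∑ q ∈ B, ∑ r : ι → Fin m, H (fun i => (q i : ℝ) / T + (r i : ℝ) / (m * T)) := by
    rw [← e.symm.tsum_eq, ← Finset.sum_product']
    have h2 : ∀ p : (ι → ℤ) × (ι → Fin m), H (fun i => ((e.symm p i : ℤ) : ℝ) / (m * T)) =
        H (fun i => (p.1 i : ℝ) / T + (p.2 i : ℝ) / (m * T)) := by
      rintro ⟨q, r⟩
      congr 1
      funext i
      rw [he]
      push_cast
      field_simp
      ring
    simp_rw [h2]
    apply tsum_eq_sum
    rintro ⟨q, r⟩ hqr
    by_contra hne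
    apply hqr
    simp only [Finset.mem_product, Finset.mem_univ, and_true]
    apply memB
    intro i
    have h3 := (norm_le_pi_norm _ i).trans (hsupp _ hne)
    simp only [Real.norm_eq_abs] at h3
    have h4 : 0 ≤ (r i : ℝ) / (m * T) := by positivity
    have h5 : (r i : ℝ) / (m * T) ≤ 1 / T := by
      rw [div_le_div_iff₀ (by positivity) (by positivity)]
      have : ((r i : ℕ) : ℝ) ≤ m := by exact_mod_cast (r i).2.le
      nlinarith
    have h6 : |(q i : ℝ) / T| ≤ R + 1 / T := by
      rw [abs_le] at h3 ⊢
      constructor <;> linarith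
    rw [abs_div, abs_of_pos (by positivity : (0:ℝ) < T), div_le_iff₀ (by positivity)] at h6
    have : (R + 1 / T) * T = R * T + 1 := by field_simp
    nlinarith
  have h2 : ∑' k : ι → ℤ, H (fun i => (k i : ℝ) / T) = ∑ q ∈ B, H (fun i => (q i : ℝ) / T) := by
    apply tsum_eq_sum
    intro q hq
    by_contra hne
    apply hq
    apply memB
    intro i
    have h3 := (norm_le_pi_norm _ i).trans (hsupp _ hne)
    simp only [Real.norm_eq_abs] at h3
    rw [abs_div, abs_of_pos (by positivity : (0:ℝ) < T), div_le_iff₀ (by positivity)] at h3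
    nlinarith
  have h3 : (m : ℝ) ^ Fintype.card ι * ∑ q ∈ B, H (fun i => (q i : ℝ) / T) =
      ∑ q ∈ B, ∑ r : ι → Fin m, H (fun i => (q i : ℝ) / T) := by
    simp [Finset.mul_sum]
  rw [h1, h2, h3, ← Finset.sum_sub_distrib]
  refine (Finset.abs_sum_le_sum_abs _ _).trans ?_
  have h4 : ∀ q ∈ B, |∑ r : ι → Fin m, H (fun i => (q i : ℝ) / T + (r i : ℝ) / (m * T)) -
      ∑ r : ι → Fin m, H (fun i => (q i : ℝ) / T)| ≤ (m : ℝ) ^ Fintype.card ι * (L / T) := by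
    intro q _
    rw [← Finset.sum_sub_distrib]
    refine (Finset.abs_sum_le_sum_abs _ _).trans ?_
    refine (Finset.sum_le_card_nsmul _ _ (L / T) ?_).trans ?_
    · intro r _
      refine (hlip _ _).trans ?_
      rw [div_eq_mul_one_div L T]
      apply mul_le_mul_of_nonneg_left _ hL
      rw [pi_norm_le_iff_of_nonneg (by positivity)]
      intro i
      simp only [Pi.sub_apply, add_sub_cancel_left, Real.norm_eq_abs]
      rw [abs_of_nonneg (by positivity), div_le_div_iff₀ (by positivity) (by positivity)]
      have : ((r i : ℕ) : ℝ) ≤ m := by exact_mod_cast (r i).2.le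
      nlinarith
    · simp
  refine (Finset.sum_le_card_nsmul _ _ _ h4).trans ?_
  rw [nsmul_eq_mul]
  calc (B.card : ℝ) * ((m : ℝ) ^ Fintype.card ι * (L / T)) ≤
      ((2 * R + 5) ^ Fintype.card ι * T ^ Fintype.card ι) * ((m : ℝ) ^ Fintype.card ι * (L / T)) := by
        gcongr
    _ = _ := by ring

end

noncomputable section

def tentF (t : ℝ) : ℝ := max 0 (1 - |t|)

lemma tentF_nonneg (t : ℝ) : 0 ≤ tentF t := le_max_left _ _
lemma tentF_le_one (t : ℝ) : tentF t ≤ 1 := max_le zero_le_one (by linarith [abs_nonneg t])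
lemma tentF_supp {t : ℝ} (h : tentF t ≠ 0) : |t| ≤ 1 := by
  by_contra h1
  apply h
  exact max_eq_left (by linarith)
lemma tentF_lip (s t : ℝ) : |tentF s - tentF t| ≤ |s - t| := by
  unfold tentF
  rw [max_comm 0, max_comm 0]
  refine (abs_max_sub_max_le_abs _ _ _ ).trans ?_ |>.trans (abs_abs_sub_abs_le_abs_sub s t)
  rw [abs_sub_comm]
  apply le_of_eq
  congr 1
  ring

lemma tentF_sum (y : ℝ) : ∑ k ∈ {-⌊y⌋, -⌊y⌋ - 1}, tentF (y + (k : ℤ)) = 1 := by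
  rw [Finset.sum_pair (by omega)]
  have h1 := Int.floor_le y
  have h2 := Int.lt_floor_add_one y
  have e1 : tentF (y + ((-⌊y⌋ : ℤ) : ℝ)) = 1 - (y - ⌊y⌋) := by
    unfold tentF
    push_cast
    rw [abs_of_nonneg (by linarith), max_eq_right (by linarith)]
    ring
  have e2 : tentF (y + ((-⌊y⌋ - 1 : ℤ) : ℝ)) = (y - ⌊y⌋) := by
    unfold tentF
    push_cast
    rw [abs_of_nonpos (by linarith), max_eq_right (by linarith)]
    ring
  rw [e1, e2]
  ring

lemma tentF_out (y : ℝ) (k : ℤ) (hk : k ∉ ({-⌊y⌋, -⌊y⌋ - 1} : Finset ℤ)) : tentF (y + k) = 0 := by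
  have h1 := Int.floor_le y
  have h2 := Int.lt_floor_add_one y
  simp only [Finset.mem_insert, Finset.mem_singleton, not_or] at hk
  apply max_eq_left
  rcases lt_or_gt_of_ne hk.1 with h | h
  · have h3 : k ≤ -⌊y⌋ - 2 := by omega
    have h4 : (k : ℝ) ≤ -⌊y⌋ - 2 := by exact_mod_cast h3
    rw [abs_of_nonpos (by linarith)]
    linarith
  · have h3 : -⌊y⌋ + 1 ≤ k := by omega
    have h4 : -(⌊y⌋ : ℝ) + 1 ≤ k := by exact_mod_cast h3
    rw [abs_of_nonneg (by linarith)]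
    linarith

lemma tentF_prod_sum {ι : Type*} [Fintype ι] [DecidableEq ι] (y : ι → ℝ) :
    HasSum (fun k : ι → ℤ => ∏ i, tentF (y i + k i)) 1 := by
  have h : HasSum (fun k : ι → ℤ => ∏ i, tentF (y i + k i))
    (∑ k ∈ Fintype.piFinset fun i => ({-⌊y i⌋, -⌊y i⌋ - 1} : Finset ℤ),
      ∏ i, tentF (y i + k i)) := hasSum_sum_of_ne_finset_zero ?_
  · rw [← Finset.prod_univ_sum (fun i => ({-⌊y i⌋, -⌊y i⌋ - 1} : Finset ℤ))
      (fun i k => tentF (y i + (k : ℤ)))] at h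
    simpa only [tentF_sum, Finset.prod_const_one] using h
  · intro k hk
    rw [Fintype.mem_piFinset] at hk
    push Not at hk
    obtain ⟨i, hi⟩ := hk
    exact Finset.prod_eq_zero (Finset.mem_univ i) (tentF_out _ _ hi)

lemma abs_prod_sub_prod_le' {ι : Type*} (s : Finset ι) (a b : ι → ℝ)
    (ha : ∀ i, 0 ≤ a i ∧ a i ≤ 1) (hb : ∀ i, 0 ≤ b i ∧ b i ≤ 1) :
    |∏ i ∈ s, a i - ∏ i ∈ s, b i| ≤ ∑ i ∈ s, |a i - b i| := by
  classical
  induction s using Finset.induction_on with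
  | empty => simp
  | insert j s hj ih =>
    rw [Finset.prod_insert hj, Finset.prod_insert hj, Finset.sum_insert hj]
    have h1 : a j * ∏ i ∈ s, a i - b j * ∏ i ∈ s, b i =
        (a j - b j) * ∏ i ∈ s, a i + b j * (∏ i ∈ s, a i - ∏ i ∈ s, b i) := by ring
    rw [h1]
    refine (abs_add_le _ _).trans ?_
    rw [abs_mul, abs_mul]
    have h2 : |∏ i ∈ s, a i| ≤ 1 := by
      rw [abs_of_nonneg (Finset.prod_nonneg fun i _ => (ha i).1)]
      exact Finset.prod_le_one (fun i _ => (ha i).1) (fun i _ => (ha i).2)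
    have h3 : |b j| ≤ 1 := abs_le.mpr ⟨by linarith [(hb j).1], (hb j).2⟩
    have h4 := abs_nonneg (a j - b j)
    have h5 := abs_nonneg (∏ i ∈ s, a i - ∏ i ∈ s, b i)
    nlinarith

section
variable (K : Type*) [Field K] [NumberField K]
open NumberField.mixedEmbedding NumberField.Units NumberField.Units.dirichletUnitTheorem Module
  NumberField.InfinitePlace

open scoped Classical in
def unitB : Basis (Fin (Units.rank K)) ℝ (logSpace K) :=
  (basisUnitLattice K).ofZLatticeBasis ℝ (unitLattice K)

open scoped Classical in
def phiK (x : mixedSpace K) : ℝ := ∏ i, tentF ((unitB K).equivFun (logMap x) i)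

open scoped Classical in
def GK (g : ℝ → ℝ) (x : mixedSpace K) : ℝ :=
  if mixedEmbedding.norm x = 0 then 0 else phiK K x * g (Real.log (mixedEmbedding.norm x))

open scoped Classical in
def sumL : (InfinitePlace K → ℝ) →ₗ[ℝ] ℝ :=
  ∑ w : InfinitePlace K, (mult w : ℝ) • LinearMap.proj w

open scoped Classical in
def preL : (InfinitePlace K → ℝ) →ₗ[ℝ] logSpace K :=
  LinearMap.pi fun w => (mult w.val : ℝ) • (LinearMap.proj w.val - (finrank ℚ K : ℝ)⁻¹ • sumL K)

open scoped Classical in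
def AL : (InfinitePlace K → ℝ) →ₗ[ℝ] (Fin (Units.rank K) → ℝ) × ℝ :=
  LinearMap.prod ((unitB K).equivFun.toLinearMap ∘ₗ preL K) (sumL K)

open scoped Classical in
lemma sumL_apply (v : InfinitePlace K → ℝ) : sumL K v = ∑ w, mult w * v w := by
  simp [sumL]

open scoped Classical in
lemma preL_apply (v : InfinitePlace K → ℝ) (w) :
    preL K v w = mult w.val * (v w.val - (finrank ℚ K : ℝ)⁻¹ * sumL K v) := by
  simp [preL]

open scoped Classical in
lemma AL_inj : LinearMap.ker (AL K) = ⊥ := by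
  rw [LinearMap.ker_eq_bot']
  intro v hv
  have h1 : (unitB K).equivFun (preL K v) = 0 := congrArg Prod.fst hv
  have h2 : sumL K v = 0 := congrArg Prod.snd hv
  rw [LinearEquiv.map_eq_zero_iff] at h1
  have h3 : ∀ w : InfinitePlace K, w ≠ w₀ → v w = 0 := by
    intro w hw
    have h4 := congrFun h1 ⟨w, hw⟩
    rw [preL_apply, h2, mul_zero, sub_zero] at h4
    exact (mul_eq_zero.mp h4).resolve_left (by exact_mod_cast mult_ne_zero)
  have h5 : v w₀ = 0 := by
    rw [sumL_apply, Finset.sum_eq_single w₀ (fun w _ hw => by rw [h3 w hw, mul_zero])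
      (fun h => absurd (Finset.mem_univ _) h)] at h2
    exact (mul_eq_zero.mp h2).resolve_left (by exact_mod_cast mult_ne_zero)
  funext w
  by_cases hw : w = w₀
  · rw [hw, h5]; rfl
  · rw [h3 w hw]; rfl

open scoped Classical in
lemma AL_log (x : mixedSpace K) (hx : mixedEmbedding.norm x ≠ 0) :
    AL K (fun w => Real.log (normAtPlace w x)) =
      ((unitB K).equivFun (logMap x), Real.log (mixedEmbedding.norm x)) := by
  have h1 : sumL K (fun w => Real.log (normAtPlace w x)) = Real.log (mixedEmbedding.norm x) := by
    rw [sumL_apply, mixedEmbedding.norm_apply, Real.log_prod]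
    · simp [Real.log_pow]
    · intro w _
      exact pow_ne_zero _ (mixedEmbedding.norm_ne_zero_iff.mp hx w)
  have h2 : preL K (fun w => Real.log (normAtPlace w x)) = logMap x := by
    funext w
    rw [preL_apply, h1, logMap_apply]
    ring
  exact Prod.ext (by simp [AL, h2]) h1

lemma abs_log_sub_le {a b c : ℝ} (hc : 0 < c) (ha : c ≤ a) (hb : c ≤ b) :
    |Real.log a - Real.log b| ≤ |a - b| / c := by
  wlog h : b ≤ a generalizing a b with H
  · rw [abs_sub_comm, abs_sub_comm a b]
    exact H hb ha (by linarith)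
  have hb0 : 0 < b := by linarith
  have ha0 : 0 < a := by linarith
  rw [abs_of_nonneg (sub_nonneg.mpr (Real.log_le_log hb0 h)), abs_of_nonneg (by linarith),
    ← Real.log_div ha0.ne' hb0.ne']
  refine (Real.log_le_sub_one_of_pos (by positivity)).trans ?_
  rw [div_sub_one hb0.ne']
  exact div_le_div_of_nonneg_left (by linarith) hc hb

open scoped Classical in
lemma normAtPlace_sub_le (w : InfinitePlace K) (x y : mixedSpace K) :
    |normAtPlace w x - normAtPlace w y| ≤ ‖x - y‖ := by
  have h0 : ∀ z : mixedSpace K, normAtPlace w z ≤ ‖z‖ := by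
    intro z
    rw [norm_eq_sup'_normAtPlace]
    exact Finset.le_sup' (fun w => normAtPlace w z) (Finset.mem_univ w)
  have h1 := normAtPlace_add_le w (x - y) y
  have h2 := normAtPlace_add_le w (y - x) x
  have h3 := h0 (x - y)
  have h4 := h0 (y - x)
  rw [norm_sub_rev] at h4
  simp only [sub_add_cancel] at h1 h2
  rw [abs_le]
  constructor <;> linarith

open scoped Classical in
lemma GK_lip : ∃ R C : ℝ, 0 ≤ R ∧ 0 ≤ C ∧ ∀ (g : ℝ → ℝ) (L : ℝ), 1 ≤ L →
    (∀ t, 0 ≤ g t ∧ g t ≤ 1) → (∀ s t, |g s - g t| ≤ L * |s - t|) → (∀ t, g t ≠ 0 → |t| ≤ 2) →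
    (∀ x, GK K g x ≠ 0 → ‖x‖ ≤ R) ∧ ∀ x y, |GK K g x - GK K g y| ≤ C * L * ‖x - y‖ := by
  obtain ⟨κ, hκ, hanti⟩ := (AL K).exists_antilipschitzWith (AL_inj K)
  set M : ℝ := ‖LinearMap.toContinuousLinearMap (AL K)‖ with hM
  have hMv : ∀ v, ‖AL K v‖ ≤ M * ‖v‖ := fun v =>
    (LinearMap.toContinuousLinearMap (AL K)).le_opNorm v
  have hM0 : 0 ≤ M := norm_nonneg _
  set b : ℝ := 2 * κ with hb
  set c : ℝ := Real.exp (-b) with hc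
  have hc0 : 0 < c := Real.exp_pos _
  set r : ℝ := ((Fintype.card (Fin (Units.rank K)) : ℕ) : ℝ) with hr
  have hr0 : 0 ≤ r := by positivity
  refine ⟨Real.exp b, 2 / c + (r + 1) * (M * (2 / c)), (Real.exp_pos _).le, by positivity, ?_⟩
  intro g L hL hg hglip hgs
  have hphi : ∀ x, 0 ≤ phiK K x ∧ phiK K x ≤ 1 := fun x =>
    ⟨Finset.prod_nonneg fun i _ => tentF_nonneg _,
      Finset.prod_le_one (fun i _ => tentF_nonneg _) (fun i _ => tentF_le_one _)⟩
  have hG : ∀ x, 0 ≤ GK K g x ∧ GK K g x ≤ 1 := by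
    intro x
    unfold GK
    split_ifs
    · simp
    · exact ⟨mul_nonneg (hphi x).1 (hg _).1, mul_le_one₀ (hphi x).2 (hg _).1 (hg _).2⟩
  have hne : ∀ x, GK K g x ≠ 0 → mixedEmbedding.norm x ≠ 0 := by
    intro x hx h
    apply hx
    simp [GK, h]
  have hell : ∀ x, GK K g x ≠ 0 → ∀ w, c ≤ normAtPlace w x ∧ normAtPlace w x ≤ Real.exp b := by
    intro x hx w
    have hn := hne x hx
    have h1 : phiK K x ≠ 0 ∧ g (Real.log (mixedEmbedding.norm x)) ≠ 0 := by
      unfold GK at hx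
      rw [if_neg hn] at hx
      exact ⟨left_ne_zero_of_mul hx, right_ne_zero_of_mul hx⟩
    have h2 : ‖AL K (fun w => Real.log (normAtPlace w x))‖ ≤ 2 := by
      rw [AL_log K x hn, Prod.norm_def]
      apply max_le
      · rw [pi_norm_le_iff_of_nonneg (by norm_num)]
        intro i
        have h3 := Finset.prod_ne_zero_iff.mp h1.1 i (Finset.mem_univ i)
        have := tentF_supp h3
        rw [Real.norm_eq_abs]
        linarith
      · exact hgs _ h1.2
    have h3 : ‖(fun w => Real.log (normAtPlace w x))‖ ≤ b := by
      have h4 := hanti.le_mul_dist (fun w => Real.log (normAtPlace w x)) 0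
      rw [map_zero, dist_zero_right, dist_zero_right] at h4
      refine h4.trans ?_
      rw [hb, mul_comm]
      exact mul_le_mul_of_nonneg_right h2 κ.2
    have h4 := (norm_le_pi_norm _ w).trans h3
    rw [Real.norm_eq_abs, abs_le] at h4
    have hp : 0 < normAtPlace w x :=
      lt_of_le_of_ne (normAtPlace_nonneg _ _) (mixedEmbedding.norm_ne_zero_iff.mp hn w).symm
    rw [hc]
    exact ⟨(Real.le_log_iff_exp_le hp).mp h4.1, (Real.log_le_iff_le_exp hp).mp h4.2⟩
  refine ⟨?_, ?_⟩
  · intro x hx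
    rw [norm_eq_sup'_normAtPlace]
    apply Finset.sup'_le
    intro w _
    exact (hell x hx w).2
  intro x y
  have hzero : 0 ≤ ‖x - y‖ := norm_nonneg _
  wlog hx : GK K g x ≠ 0 generalizing x y with H
  · by_cases hy : GK K g y ≠ 0
    · rw [abs_sub_comm, norm_sub_rev]
      exact H y x (norm_nonneg _) hy
    · push Not at hx hy
      rw [hx, hy]
      simp only [sub_self, abs_zero]
      have hL0 : 0 ≤ L := by linarith
      positivity
  rcases le_or_gt (c / 2) ‖x - y‖ with h | h
  · have h1 : |GK K g x - GK K g y| ≤ 1 := by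
      rw [abs_le]
      constructor <;> linarith [(hG x).1, (hG x).2, (hG y).1, (hG y).2]
    have h2 : 1 ≤ 2 / c * ‖x - y‖ := by
      rw [div_mul_eq_mul_div, le_div_iff₀ hc0]
      linarith
    have h3 : 0 ≤ (r + 1) * (M * (2 / c)) := by positivity
    calc |GK K g x - GK K g y| ≤ 1 := h1
      _ ≤ 2 / c * ‖x - y‖ := h2
      _ ≤ (2 / c + (r + 1) * (M * (2 / c))) * ‖x - y‖ := by gcongr; linarith
      _ ≤ (2 / c + (r + 1) * (M * (2 / c))) * L * ‖x - y‖ := by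
        gcongr
        exact le_mul_of_one_le_right (by positivity) hL
  · have hxn := hne x hx
    have hyw : ∀ w, c / 2 ≤ normAtPlace w y := by
      intro w
      have h1 := abs_le.mp (normAtPlace_sub_le K w x y)
      linarith [(hell x hx w).1]
    have hyn : mixedEmbedding.norm y ≠ 0 := by
      rw [mixedEmbedding.norm_ne_zero_iff]
      intro w
      have := hyw w
      exact (by linarith : 0 < normAtPlace w y).ne'
    have hv : ‖(fun w => Real.log (normAtPlace w x)) - (fun w => Real.log (normAtPlace w y))‖ ≤
        2 / c * ‖x - y‖ := by
      rw [pi_norm_le_iff_of_nonneg (by positivity)]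
      intro w
      rw [Pi.sub_apply, Real.norm_eq_abs]
      refine (abs_log_sub_le (half_pos hc0) (by linarith [(hell x hx w).1]) (hyw w)).trans ?_
      rw [div_mul_eq_mul_div, div_div_eq_mul_div, mul_comm]
      gcongr
      exact normAtPlace_sub_le K w x y
    have hA := (hMv _).trans (mul_le_mul_of_nonneg_left hv hM0)
    rw [map_sub, AL_log K x hxn, AL_log K y hyn] at hA
    set D := M * (2 / c * ‖x - y‖) with hD
    have hA1 : ∀ i, |(unitB K).equivFun (logMap x) i - (unitB K).equivFun (logMap y) i| ≤ D := by
      intro i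
      have h1 := (norm_le_pi_norm _ i).trans ((norm_fst_le _).trans hA)
      exact h1
    have hA2 : |Real.log (mixedEmbedding.norm x) - Real.log (mixedEmbedding.norm y)| ≤ D :=
      (norm_snd_le _).trans hA
    have hD0 : 0 ≤ D := by positivity
    have hp : |phiK K x - phiK K y| ≤ r * D := by
      unfold phiK
      refine (abs_prod_sub_prod_le' _ _ _ (fun i => ⟨tentF_nonneg _, tentF_le_one _⟩)
        (fun i => ⟨tentF_nonneg _, tentF_le_one _⟩)).trans ?_
      refine (Finset.sum_le_card_nsmul _ _ D ?_).trans ?_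
      · intro i _
        exact (tentF_lip _ _).trans (hA1 i)
      · rw [nsmul_eq_mul, hr, Finset.card_univ]
    have hgg : |g (Real.log (mixedEmbedding.norm x)) - g (Real.log (mixedEmbedding.norm y))| ≤ L * D :=
      (hglip _ _).trans (mul_le_mul_of_nonneg_left hA2 (by linarith))
    unfold GK
    rw [if_neg hxn, if_neg hyn]
    set g1 := g (Real.log (mixedEmbedding.norm x))
    set g2 := g (Real.log (mixedEmbedding.norm y))
    have e1 : phiK K x * g1 - phiK K y * g2 = (phiK K x - phiK K y) * g1 + phiK K y * (g1 - g2) := by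
      ring
    rw [e1]
    refine (abs_add_le _ _).trans ?_
    rw [abs_mul, abs_mul]
    have hg1 : |g1| ≤ 1 := abs_le.mpr ⟨by linarith [(hg (Real.log (mixedEmbedding.norm x))).1], (hg _).2⟩
    have hp2 : |phiK K y| ≤ 1 := abs_le.mpr ⟨by linarith [(hphi y).1], (hphi y).2⟩
    have f1 : |phiK K x - phiK K y| * |g1| ≤ r * D * 1 :=
      mul_le_mul hp hg1 (abs_nonneg _) (by positivity)
    have f2 : |phiK K y| * |g1 - g2| ≤ 1 * (L * D) :=
      mul_le_mul hp2 hgg (abs_nonneg _) (by positivity)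
    have f3 : r * D ≤ r * L * D := by
      have : r ≤ r * L := le_mul_of_one_le_right hr0 hL
      gcongr
    have f4 : 0 ≤ 2 / c * L * ‖x - y‖ := by positivity
    calc _ ≤ (r + 1) * L * D := by linarith
      _ = (r + 1) * (M * (2 / c)) * L * ‖x - y‖ := by rw [hD]; ring
      _ ≤ _ := by linarith

end
end

noncomputable section

section
variable (K : Type*) [Field K] [NumberField K]
open NumberField.mixedEmbedding NumberField.Units NumberField.Units.dirichletUnitTheorem Module
  NumberField.InfinitePlace
open scoped nonZeroDivisors

open scoped Classical in
lemma logMap_unit_prod (x : mixedSpace K) (hx : mixedEmbedding.norm x ≠ 0) (z : torsion K)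
    (k : Fin (rank K) → ℤ) :
    logMap (((z : (𝓞 K)ˣ) * ∏ i, (fundSystem K i) ^ (k i)) • x) =
      logMap x + (unitB K).equivFun.symm (fun i => (k i : ℝ)) := by
  rw [logMap_unit_smul _ hx, add_comm]
  congr 1
  rw [ofMul_mul, map_add, (logEmbedding_eq_zero_iff (K := K)).mpr z.2, zero_add, ofMul_prod,
    map_sum, Basis.equivFun_symm_apply]
  refine Finset.sum_congr rfl fun i _ => ?_
  rw [ofMul_zpow, map_zsmul, logEmbedding_fundSystem, unitB, Basis.ofZLatticeBasis_apply,
    Int.cast_smul_eq_zsmul]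

open scoped Classical in
lemma phiK_unit_prod (x : mixedSpace K) (hx : mixedEmbedding.norm x ≠ 0) (z : torsion K)
    (k : Fin (rank K) → ℤ) :
    phiK K (((z : (𝓞 K)ˣ) * ∏ i, (fundSystem K i) ^ (k i)) • x) =
      1 * ∏ i, tentF ((unitB K).equivFun (logMap x) i + k i) := by
  rw [phiK, one_mul, logMap_unit_prod K x hx, map_add, LinearEquiv.apply_symm_apply]
  rfl

lemma exists_unit_equiv : ∃ e : torsion K × (Fin (rank K) → ℤ) ≃ (𝓞 K)ˣ, ∀ z, e z =
      (z.1 : (𝓞 K)ˣ) * ∏ i, (fundSystem K i) ^ (z.2 i) :=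
    ⟨Equiv.ofBijective
    (fun ζe => (ζe.1 : (𝓞 K)ˣ) * ∏ i, (fundSystem K i) ^ (ζe.2 i)) (by
      rw [Function.bijective_iff_existsUnique]
      intro u
      obtain ⟨z, hz, hz2⟩ := exist_unique_eq_mul_prod K u
      exact ⟨z, hz.symm, fun y hy => hz2 y hy.symm⟩), fun z => rfl⟩

lemma unit_sum_gen {α β : Type*} [Finite α] (f : β → ℝ) (hf : HasSum f 1) (hf0 : ∀ b, 0 ≤ f b) :
    HasSum (fun z : α × β => (1 : ℝ) * f z.2) (Nat.card α : ℝ) := by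
  have hs : HasSum (fun _ : α => (1 : ℝ)) (Nat.card α : ℝ) := by
    let _ : Fintype α := Fintype.ofFinite _
    have := hasSum_fintype (fun _ : α => (1 : ℝ))
    simpa [Nat.card_eq_fintype_card] using this
  have := hs.mul hf (hs.summable.mul_of_nonneg hf.summable (fun _ => zero_le_one) hf0)
  rw [mul_one] at this
  exact this

lemma unit_sum_aux {r : ℕ} (y : Fin r → ℝ) :
    HasSum (fun z : torsion K × (Fin r → ℤ) => (1 : ℝ) * ∏ i, tentF (y i + z.2 i))
      (torsionOrder K) :=
  unit_sum_gen (α := torsion K) (fun k : Fin r → ℤ => ∏ i, tentF (y i + k i)) (tentF_prod_sum y)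
    (fun k => Finset.prod_nonneg fun i _ => tentF_nonneg _)

open scoped Classical in
lemma unit_sum (x : mixedSpace K) (hx : mixedEmbedding.norm x ≠ 0) :
    HasSum (fun u : (𝓞 K)ˣ => phiK K (u • x)) (torsionOrder K) := by
  obtain ⟨e, he⟩ := exists_unit_equiv K
  rw [← e.hasSum_iff]
  have e2 : (fun u : (𝓞 K)ˣ => phiK K (u • x)) ∘ e = fun z =>
      1 * ∏ i, tentF ((unitB K).equivFun (logMap x) i + z.2 i) := by
    funext z
    rw [Function.comp_apply, he]
    exact phiK_unit_prod K x hx z.1 z.2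
  rw [e2]
  exact unit_sum_aux K _

/-- principal ideals divisible by `J` -/
def PrJ (J : (Ideal (𝓞 K))⁰) : Type _ :=
  {I : Ideal (𝓞 K) // I ≠ ⊥ ∧ (J : Ideal (𝓞 K)) ∣ I ∧ Submodule.IsPrincipal I}

open scoped Classical in
lemma HK_supp (J : (Ideal (𝓞 K))⁰) : ∃ R C : ℝ, 0 ≤ R ∧ 0 ≤ C ∧ ∀ (g : ℝ → ℝ) (L : ℝ), 1 ≤ L →
    (∀ t, 0 ≤ g t ∧ g t ≤ 1) → (∀ s t, |g s - g t| ≤ L * |s - t|) → (∀ t, g t ≠ 0 → |t| ≤ 2) →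
    (∀ t, GK K g ((fractionalIdealLatticeBasis K (FractionalIdeal.mk0 K J)).equivFun.symm t) ≠ 0
      → ‖t‖ ≤ R) ∧
    ∀ s t, |GK K g ((fractionalIdealLatticeBasis K (FractionalIdeal.mk0 K J)).equivFun.symm s) -
      GK K g ((fractionalIdealLatticeBasis K (FractionalIdeal.mk0 K J)).equivFun.symm t)| ≤
      C * L * ‖s - t‖ := by
  obtain ⟨R, C, hR, hC, h⟩ := GK_lip K
  set b := (fractionalIdealLatticeBasis K (FractionalIdeal.mk0 K J)).equivFun
  set M : ℝ := ‖LinearMap.toContinuousLinearMap b.toLinearMap‖ with hM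
  set M' : ℝ := ‖LinearMap.toContinuousLinearMap b.symm.toLinearMap‖ with hM'
  have h1 : ∀ x, ‖b x‖ ≤ M * ‖x‖ := fun x =>
    (LinearMap.toContinuousLinearMap b.toLinearMap).le_opNorm x
  have h2 : ∀ x, ‖b.symm x‖ ≤ M' * ‖x‖ := fun x =>
    (LinearMap.toContinuousLinearMap b.symm.toLinearMap).le_opNorm x
  have hM0 : 0 ≤ M := norm_nonneg _
  have hM0' : 0 ≤ M' := norm_nonneg _
  refine ⟨M * R, C * M', by positivity, by positivity, ?_⟩
  intro g L hL hg1 hg2 hg3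
  obtain ⟨hs, hl⟩ := h g L hL hg1 hg2 hg3
  constructor
  · intro t ht
    have := h1 (b.symm t)
    rw [LinearEquiv.apply_symm_apply] at this
    exact this.trans (mul_le_mul_of_nonneg_left (hs _ ht) hM0)
  · intro s t
    refine (hl _ _).trans ?_
    rw [← map_sub]
    have hL0 : 0 ≤ L := by linarith
    calc C * L * ‖b.symm (s - t)‖ ≤ C * L * (M' * ‖s - t‖) := by
          gcongr
          exact h2 _
      _ = _ := by ring

open scoped Classical in
lemma G1_sum (J : (Ideal (𝓞 K))⁰) (g : ℝ → ℝ) (T : ℝ) (hT : 0 < T) (s : ℝ)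
    (hs : HasSum (fun k : _ → ℤ => GK K g ((fractionalIdealLatticeBasis K
      (FractionalIdeal.mk0 K J)).equivFun.symm (fun i => (k i : ℝ) / T))) s) :
    HasSum (fun I : PrJ K J => (torsionOrder K : ℝ) *
      g (Real.log (Ideal.absNorm I.1 / T ^ finrank ℚ K))) s := by
  set B := fractionalIdealLatticeBasis K (FractionalIdeal.mk0 K J) with hB
  let psi : (_ → ℤ) → mixedSpace K := fun k => ∑ i, k i • B i
  have hpsi_inj : Function.Injective psi := by
    intro k k' h
    have h2 : ∀ k : _ → ℤ, psi k = B.equivFun.symm (fun i => (k i : ℝ)) := by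
      intro k
      simp only [psi, Basis.equivFun_symm_apply, Int.cast_smul_eq_zsmul]
    rw [h2, h2] at h
    have h3 := B.equivFun.symm.injective h
    funext i
    exact_mod_cast congrFun h3 i
  have hrange : ∀ x, (∃ k, psi k = x) ↔ ∃ a : 𝓞 K, a ∈ (J : Ideal (𝓞 K)) ∧
      mixedEmbedding K (a : K) = x := by
    intro x
    have h1 := mem_span_fractionalIdealLatticeBasis K (FractionalIdeal.mk0 K J) (x := x)
    rw [Submodule.mem_span_range_iff_exists_fun] at h1
    refine h1.trans ?_
    simp only [Set.mem_image, FractionalIdeal.coe_mk0, SetLike.mem_coe,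
      FractionalIdeal.mem_coeIdeal]
    constructor
    · rintro ⟨y, ⟨a, ha, rfl⟩, hy⟩
      exact ⟨a, ha, hy⟩
    · rintro ⟨a, ha, hy⟩
      exact ⟨_, ⟨a, ha, rfl⟩, hy⟩
  have hval : ∀ k : _ → ℤ, B.equivFun.symm (fun i => (k i : ℝ) / T) = T⁻¹ • psi k := by
    intro k
    simp only [psi, Basis.equivFun_symm_apply, Finset.smul_sum, ← Int.cast_smul_eq_zsmul ℝ,
      smul_smul]
    refine Finset.sum_congr rfl fun i _ => ?_
    congr 1
    field_simp
  simp only [hval] at hs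
  have hpr : ∀ I : PrJ K J, Submodule.IsPrincipal I.1 := fun I => I.2.2.2
  let gen : PrJ K J → 𝓞 K := fun I => @Submodule.IsPrincipal.generator _ _ _ _ _ I.1 (hpr I)
  have hgen : ∀ I, Ideal.span {gen I} = I.1 := fun I =>
    @Submodule.IsPrincipal.span_singleton_generator _ _ _ _ _ I.1 (hpr I)
  have hgenJ : ∀ I, gen I ∈ (J : Ideal (𝓞 K)) := by
    intro I
    apply Ideal.dvd_iff_le.mp I.2.2.1
    exact @Submodule.IsPrincipal.generator_mem _ _ _ _ _ I.1 (hpr I)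
  have hgen0 : ∀ I, gen I ≠ 0 := by
    intro I h
    apply I.2.1
    rw [← hgen, h]
    simp
  have hex : ∀ Iu : PrJ K J × (𝓞 K)ˣ, ∃ k, psi k = Iu.2 • mixedEmbedding K ((gen Iu.1 : 𝓞 K) : K) := by
    intro Iu
    rw [hrange]
    refine ⟨(Iu.2 : 𝓞 K) * gen Iu.1, Ideal.mul_mem_left _ _ (hgenJ _), ?_⟩
    rw [unitSMul_smul, ← map_mul]
    congr 1
  choose Φ hΦ using hex
  have hΦ_inj : Function.Injective Φ := by
    rintro ⟨I, u⟩ ⟨I', u'⟩ h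
    have h1 := hΦ (I, u)
    rw [h, hΦ] at h1
    simp only [unitSMul_smul, ← map_mul] at h1
    have h2 := mixedEmbedding_injective K h1
    have h3 : (u' : 𝓞 K) * gen I' = u * gen I := by exact_mod_cast h2
    have h4 : I = I' := by
      apply Subtype.ext
      rw [← hgen I, ← hgen I', Ideal.span_singleton_eq_span_singleton]
      have a1 : Associated (gen I) (u * gen I) := ⟨u, mul_comm _ _⟩
      have a2 : Associated (gen I') (u' * gen I') := ⟨u', mul_comm _ _⟩
      rw [h3] at a2
      exact a1.trans a2.symm
    subst h4
    have h5 := mul_right_cancel₀ (hgen0 I) h3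
    rw [Units.ext h5]
  have hΦ_range : ∀ k ∉ Set.range Φ, GK K g (T⁻¹ • psi k) = 0 := by
    intro k hk
    obtain ⟨a, ha, hak⟩ := (hrange (psi k)).mp ⟨k, rfl⟩
    by_cases ha0 : a = 0
    · rw [← hak, ha0]
      simp [GK]
    · exfalso
      apply hk
      let I : PrJ K J := ⟨Ideal.span {a}, by simpa using ha0,
        Ideal.dvd_iff_le.mpr ((Ideal.span_singleton_le_iff_mem _).mpr ha), ⟨⟨a, rfl⟩⟩⟩
      have h1 : Associated (gen I) a := by
        rw [← Ideal.span_singleton_eq_span_singleton, hgen]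
      obtain ⟨u, hu⟩ := h1
      refine ⟨(I, u), hpsi_inj ?_⟩
      rw [hΦ, ← hak, unitSMul_smul, ← map_mul, ← hu]
      congr 1
      push_cast
      ring
  rw [← hΦ_inj.hasSum_iff hΦ_range] at hs
  refine hs.prod_fiberwise ?_
  intro I
  simp only [Function.comp_def, hΦ]
  set x := T⁻¹ • mixedEmbedding K ((gen I : 𝓞 K) : K) with hx
  have hTi : 0 < T⁻¹ := inv_pos.mpr hT
  have hnx : mixedEmbedding.norm x = Ideal.absNorm I.1 / T ^ finrank ℚ K := by
    rw [hx, mixedEmbedding.norm_smul, norm_eq_norm, abs_of_pos hTi, ← hgen I,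
      Ideal.absNorm_span_singleton, Nat.cast_natAbs, ← Algebra.coe_norm_int]
    push_cast
    rw [inv_pow]
    field_simp
  have hnx0 : mixedEmbedding.norm x ≠ 0 := by
    rw [hnx]
    have : Ideal.absNorm I.1 ≠ 0 := by
      rw [Ne, Ideal.absNorm_eq_zero_iff]
      exact I.2.1
    positivity
  have h := (unit_sum K x hnx0).mul_right (g (Real.log (mixedEmbedding.norm x)))
  rw [hnx] at h
  have e2 : (fun u : (𝓞 K)ˣ => GK K g (T⁻¹ • u • mixedEmbedding K ((gen I : 𝓞 K) : K))) =
      fun u => phiK K (u • x) * g (Real.log (Ideal.absNorm I.1 / T ^ finrank ℚ K)) := ?_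
  · rw [e2]
    exact h
  funext u
  have e1 : T⁻¹ • u • mixedEmbedding K ((gen I : 𝓞 K) : K) = u • x := by
    rw [hx, unitSMul_smul, unitSMul_smul, mul_smul_comm]
  rw [e1, GK, norm_unit_smul, if_neg hnx0, hnx]

lemma fin_supp_int {ι : Type*} [Fintype ι] (H : (ι → ℝ) → ℝ) (R T : ℝ) (hT : 0 < T)
    (hs : ∀ t, H t ≠ 0 → ‖t‖ ≤ R) : Summable (fun k : ι → ℤ => H (fun i => (k i : ℝ) / T)) := by
  classical
  apply summable_of_hasFiniteSupport
  refine (Set.Finite.pi' (t := fun _ : ι => Set.Icc (-⌈R * T⌉) ⌈R * T⌉)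
    (fun _ => Set.finite_Icc _ _)).subset ?_
  intro k hk i
  have h1 := (norm_le_pi_norm _ i).trans (hs _ hk)
  rw [Real.norm_eq_abs, abs_div, abs_of_pos hT, div_le_iff₀ hT, abs_le] at h1
  have h2 := Int.le_ceil (R * T)
  constructor
  · have : (-⌈R * T⌉ : ℝ) ≤ k i := by linarith
    exact_mod_cast this
  · have : (k i : ℝ) ≤ ⌈R * T⌉ := by linarith
    exact_mod_cast this

open scoped Classical in
lemma G1 (J : (Ideal (𝓞 K))⁰) : ∃ C : ℝ, 0 ≤ C ∧ ∀ (g : ℝ → ℝ) (L : ℝ), 1 ≤ L →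
    (∀ t, 0 ≤ g t ∧ g t ≤ 1) → (∀ s t, |g s - g t| ≤ L * |s - t|) → (∀ t, g t ≠ 0 → |t| ≤ 2) →
    (∀ T : ℝ, 0 < T → Summable fun I : PrJ K J => 
        g (Real.log (Ideal.absNorm I.1 / T ^ finrank ℚ K))) ∧
    ∀ T : ℝ, 1 ≤ T → ∀ m : ℕ, 1 ≤ m →
      |∑' I : PrJ K J, g (Real.log (Ideal.absNorm I.1 / (m * T) ^ finrank ℚ K)) -
        (m : ℝ) ^ finrank ℚ K * ∑' I : PrJ K J, 
          g (Real.log (Ideal.absNorm I.1 / T ^ finrank ℚ K))| ≤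
        C * L * ((m : ℝ) ^ finrank ℚ K * (T ^ finrank ℚ K / T)) := by
  obtain ⟨R, C, hR, hC, h⟩ := HK_supp K J
  obtain ⟨C', hC', h'⟩ := lattice_scale (ι := Free.ChooseBasisIndex ℤ
    (FractionalIdeal.mk0 K J)) R hR
  have hw : 1 ≤ (torsionOrder K : ℝ) := by
    exact_mod_cast Nat.one_le_iff_ne_zero.mpr (torsionOrder_ne_zero K)
  refine ⟨C' * C, by positivity, ?_⟩
  intro g L hL hg1 hg2 hg3
  obtain ⟨hs, hl⟩ := h g L hL hg1 hg2 hg3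
  have hsum : ∀ T : ℝ, 0 < T → _ := fun T hT =>
    G1_sum K J g T hT _ (fin_supp_int _ R T hT hs).hasSum
  have hcard : Fintype.card (Free.ChooseBasisIndex ℤ (FractionalIdeal.mk0 K J)) = finrank ℚ K := by
    rw [← finrank_eq_card_basis (basisOfFractionalIdeal K (FractionalIdeal.mk0 K J))]
  have hsm : ∀ T : ℝ, 0 < T → Summable fun I : PrJ K J => 
        g (Real.log (Ideal.absNorm I.1 / T ^ finrank ℚ K)) := by
    intro T hT
    exact (summable_mul_left_iff (by linarith : (torsionOrder K : ℝ) ≠ 0)).mp (hsum T hT).summable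
  refine ⟨hsm, ?_⟩
  intro T hT m hm
  have hT0 : 0 < T := by linarith
  have hm0 : (0 : ℝ) < m := by exact_mod_cast hm
  have hL0 : 0 ≤ L := by linarith
  have h1 := h' _ (C * L) (by positivity) hl hs T hT m hm
  rw [hcard, ← (hsum T hT0).tsum_eq, ← (hsum (m * T) (by positivity)).tsum_eq, tsum_mul_left,
    tsum_mul_left] at h1
  set a := ∑' I : PrJ K J, g (Real.log (Ideal.absNorm I.1 / (m * T) ^ finrank ℚ K))
  set b := ∑' I : PrJ K J, g (Real.log (Ideal.absNorm I.1 / T ^ finrank ℚ K))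
  have e : (torsionOrder K : ℝ) * a - (m : ℝ) ^ finrank ℚ K * (torsionOrder K * b) =
    torsionOrder K * (a - (m : ℝ) ^ finrank ℚ K * b) := by ring
  rw [e, abs_mul, abs_of_pos (by linarith)] at h1
  calc |a - (m : ℝ) ^ finrank ℚ K * b| ≤ torsionOrder K * |a - (m : ℝ) ^ finrank ℚ K * b| :=
        le_mul_of_one_le_left (abs_nonneg _) hw
    _ ≤ _ := h1
    _ = _ := by ring

end
end

noncomputable section

lemma dyadic (f : ℝ → ℝ) (a b q ρ C0 C : ℝ) (hb : 2 ≤ b) (hq : 0 ≤ q) (hρ : ρ < 1)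
    (hqρ : q ≤ ρ * b ^ a) (hC0 : 0 ≤ C0) (hC : 0 ≤ C)
    (h0 : ∀ x, 0 < x → x < 1 → f x ≤ C0 * x ^ a)
    (h1 : ∀ x, 1 ≤ x → f x ≤ q * f (x / b) + C * x ^ a) :
    ∀ x, 0 < x → f x ≤ (C0 + C / (1 - ρ)) * x ^ a := by
  have h1ρ : 0 < 1 - ρ := by linarith
  have hb0 : 0 < b := by linarith
  set D := C0 + C / (1 - ρ) with hD
  have hD0 : 0 ≤ D := by positivity
  have hDC : C ≤ (1 - ρ) * D := by
    have : (1 - ρ) * D = (1 - ρ) * C0 + C := by rw [hD]; field_simp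
    rw [this]
    have : 0 ≤ (1 - ρ) * C0 := by positivity
    linarith
  have key : ∀ k : ℕ, ∀ x, 0 < x → x < 2 ^ k → f x ≤ D * x ^ a := by
    intro k
    induction k with
    | zero =>
      intro x hx hx1
      refine (h0 x hx (by simpa using hx1)).trans ?_
      have : 0 ≤ x ^ a := Real.rpow_nonneg hx.le _
      gcongr
      rw [hD]
      have : 0 ≤ C / (1 - ρ) := by positivity
      linarith
    | succ k ih =>
      intro x hx hxk
      have hxa : 0 ≤ x ^ a := Real.rpow_nonneg hx.le _
      have hba : 0 < b ^ a := Real.rpow_pos_of_pos hb0 _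
      rcases lt_or_ge x 1 with hx1 | hx1
      · refine (h0 x hx hx1).trans ?_
        gcongr
        rw [hD]
        have : 0 ≤ C / (1 - ρ) := by positivity
        linarith
      · have h2 : f (x / b) ≤ D * (x / b) ^ a := by
          apply ih _ (by positivity)
          rw [div_lt_iff₀ hb0]
          calc x < 2 ^ (k + 1) := hxk
            _ = 2 ^ k * 2 := pow_succ _ _
            _ ≤ 2 ^ k * b := by gcongr
        calc f x ≤ q * f (x / b) + C * x ^ a := h1 x hx1
          _ ≤ q * (D * (x / b) ^ a) + C * x ^ a := by gcongr
          _ = (q * D) * (x ^ a / b ^ a) + C * x ^ a := by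
              rw [Real.div_rpow hx.le hb0.le]; ring
          _ ≤ (ρ * b ^ a * D) * (x ^ a / b ^ a) + C * x ^ a := by gcongr
          _ = (ρ * D + C) * x ^ a := by field_simp
          _ ≤ D * x ^ a := by
              gcongr
              linarith
  intro x hx
  obtain ⟨k, hk⟩ := pow_unbounded_of_one_lt x (by norm_num : (1 : ℝ) < 2)
  exact key k x hx hk

def trapF (a b η t : ℝ) : ℝ := max (min (min (t - a) (b - t) / η) 1) 0

lemma trapF_01 (a b η t : ℝ) : 0 ≤ trapF a b η t ∧ trapF a b η t ≤ 1 :=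
  ⟨le_max_right _ _, max_le (min_le_right _ _) zero_le_one⟩

lemma trapF_lip (a b η : ℝ) (hη : 0 < η) (s t : ℝ) :
    |trapF a b η s - trapF a b η t| ≤ 1 / η * |s - t| := by
  unfold trapF
  refine (abs_max_sub_max_le_abs _ _ _).trans ?_
  refine (abs_min_sub_min_le_max _ _ _ _).trans ?_
  rw [sub_self, abs_zero, max_eq_left (abs_nonneg _), ← sub_div, abs_div, abs_of_pos hη,
    div_le_iff₀ hη]
  refine (abs_min_sub_min_le_max _ _ _ _).trans ?_
  apply max_le
  · apply le_of_eq
    field_simp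
    congr 1
    ring
  · rw [abs_sub_comm s t]
    apply le_of_eq
    field_simp
    congr 1
    ring

lemma trapF_supp {a b η t : ℝ} (hη : 0 < η) (h : trapF a b η t ≠ 0) : a < t ∧ t < b := by
  by_contra h1
  apply h
  apply max_eq_right
  refine (min_le_left _ _).trans ?_
  apply div_nonpos_of_nonpos_of_nonneg _ hη.le
  by_contra h2
  push Not at h2
  rw [lt_min_iff] at h2
  exact h1 ⟨by linarith, by linarith⟩

lemma trapF_one {a b η t : ℝ} (hη : 0 < η) (h1 : a + η ≤ t) (h2 : t ≤ b - η) :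
    trapF a b η t = 1 := by
  unfold trapF
  rw [min_eq_right, max_eq_left zero_le_one]
  rw [le_div_iff₀ hη, one_mul]
  exact le_min (by linarith) (by linarith)

section
variable (K : Type*) [Field K] [NumberField K]
open Module
open scoped nonZeroDivisors

lemma mk0_eq_iff_pr (C : ClassGroup (𝓞 K)) (J I : (Ideal (𝓞 K))⁰) (hJ : ClassGroup.mk0 J = C⁻¹) :
    ClassGroup.mk0 I = C ↔ Submodule.IsPrincipal ((J * I : (Ideal (𝓞 K))⁰) : Ideal (𝓞 K)) := by
  rw [← ClassGroup.mk0_eq_one_iff (SetLike.coe_mem _)]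
  have h : ClassGroup.mk0 (J * I) = C⁻¹ * ClassGroup.mk0 I := by rw [map_mul, hJ]
  constructor
  · intro h1
    rw [h1, inv_mul_cancel] at h
    exact h
  · intro h1
    have h2 : ClassGroup.mk0 (J * I) = 1 := h1
    rw [h, inv_mul_eq_one] at h2
    exact h2.symm

lemma exists_equivPrJ (C : ClassGroup (𝓞 K)) (J : (Ideal (𝓞 K))⁰) (hJ : ClassGroup.mk0 J = C⁻¹) :
    ∃ e : {I : (Ideal (𝓞 K))⁰ // ClassGroup.mk0 I = C} ≃ PrJ K J,
      ∀ I, (e I).1 = (J : Ideal (𝓞 K)) * (I.1 : Ideal (𝓞 K)) := by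
  let f : {I : (Ideal (𝓞 K))⁰ // ClassGroup.mk0 I = C} → PrJ K J := fun I =>
    ⟨((J * I.1 : (Ideal (𝓞 K))⁰) : Ideal (𝓞 K)), nonZeroDivisors.coe_ne_zero _,
      Dvd.intro _ rfl, (mk0_eq_iff_pr K C J I.1 hJ).mp I.2⟩
  have hf : ∀ I, (f I).1 = (J : Ideal (𝓞 K)) * (I.1 : Ideal (𝓞 K)) := fun I => rfl
  refine ⟨Equiv.ofBijective f ⟨?_, ?_⟩, hf⟩
  · intro I I' h
    have h1 : (f I).1 = (f I').1 := by rw [h]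
    rw [hf, hf] at h1
    have h2 := mul_left_cancel₀ (nonZeroDivisors.coe_ne_zero J) h1
    exact Subtype.ext (Subtype.ext h2)
  · intro P
    obtain ⟨I, hI⟩ := P.2.2.1
    have hI0 : I ≠ 0 := by
      rintro rfl
      apply P.2.1
      rw [hI, mul_zero]
      rfl
    obtain ⟨I', rfl⟩ : ∃ I' : (Ideal (𝓞 K))⁰, (I' : Ideal (𝓞 K)) = I :=
      ⟨⟨I, mem_nonZeroDivisors_of_ne_zero hI0⟩, rfl⟩
    have hp : Submodule.IsPrincipal ((J * I' : (Ideal (𝓞 K))⁰) : Ideal (𝓞 K)) := by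
      rw [Submonoid.coe_mul, ← hI]
      exact P.2.2.2
    exact ⟨⟨I', (mk0_eq_iff_pr K C J I' hJ).mpr hp⟩, Subtype.ext hI.symm⟩

/-- smooth count -/
def SK (g : ℝ → ℝ) (X : ℝ) : ℝ :=
  ∑' I : (Ideal (𝓞 K))⁰, g (Real.log (Ideal.absNorm (I : Ideal (𝓞 K)) / X))

lemma G2C (C : ClassGroup (𝓞 K)) : ∃ D : ℝ, 0 ≤ D ∧ ∀ (g : ℝ → ℝ) (L : ℝ), 1 ≤ L →
    (∀ t, 0 ≤ g t ∧ g t ≤ 1) → (∀ s t, |g s - g t| ≤ L * |s - t|) → (∀ t, g t ≠ 0 → |t| ≤ 2) →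
    (∀ X : ℝ, 0 < X → Summable fun I : {I : (Ideal (𝓞 K))⁰ // ClassGroup.mk0 I = C} =>
        g (Real.log (Ideal.absNorm (I.1 : Ideal (𝓞 K)) / X))) ∧
    ∀ X : ℝ, 1 ≤ X → ∀ m : ℕ, 1 ≤ m →
      |∑' I : {I : (Ideal (𝓞 K))⁰ // ClassGroup.mk0 I = C},
          g (Real.log (Ideal.absNorm (I.1 : Ideal (𝓞 K)) / (m ^ finrank ℚ K * X))) -
        (m : ℝ) ^ finrank ℚ K * ∑' I : {I : (Ideal (𝓞 K))⁰ // ClassGroup.mk0 I = C},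
          g (Real.log (Ideal.absNorm (I.1 : Ideal (𝓞 K)) / X))| ≤
        D * L * ((m : ℝ) ^ finrank ℚ K * X ^ (1 - 1 / (finrank ℚ K : ℝ))) := by
  obtain ⟨J, hJ⟩ := ClassGroup.mk0_surjective C⁻¹
  obtain ⟨D, hD, h⟩ := G1 K J
  obtain ⟨e, he⟩ := exists_equivPrJ K C J hJ
  set n := finrank ℚ K with hn
  have hn0 : n ≠ 0 := finrank_pos.ne'
  have hnr : (n : ℝ) ≠ 0 := by exact_mod_cast hn0
  set NJ : ℝ := (Ideal.absNorm (J : Ideal (𝓞 K)) : ℝ) with hNJ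
  have hNJ1 : 1 ≤ NJ := by
    rw [hNJ]
    exact_mod_cast Nat.one_le_iff_ne_zero.mpr (Ideal.absNorm_ne_zero_of_nonZeroDivisors J)
  have hNJ0 : 0 < NJ := by linarith
  refine ⟨D * NJ ^ (1 - 1 / (n : ℝ)), by positivity, ?_⟩
  intro g L hL hg1 hg2 hg3
  obtain ⟨hs, hl⟩ := h g L hL hg1 hg2 hg3
  have hT : ∀ X : ℝ, 0 < X → ((X * NJ) ^ (1 / (n : ℝ))) ^ n = X * NJ := by
    intro X hX
    rw [← Real.rpow_natCast, ← Real.rpow_mul (by positivity), one_div_mul_cancel hnr,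
      Real.rpow_one]
  have hE : ∀ X : ℝ, 0 < X → (fun I : {I : (Ideal (𝓞 K))⁰ // ClassGroup.mk0 I = C} =>
      g (Real.log (Ideal.absNorm (I.1 : Ideal (𝓞 K)) / X))) =
      (fun P : PrJ K J => g (Real.log (Ideal.absNorm P.1 / (X * NJ)))) ∘ e := by
    intro X hX
    funext I
    simp only [Function.comp_apply, he, map_mul]
    congr 2
    push_cast
    rw [← hNJ]
    field_simp
  have hE2 : ∀ X : ℝ, 0 < X → ∑' I : {I : (Ideal (𝓞 K))⁰ // ClassGroup.mk0 I = C},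
      g (Real.log (Ideal.absNorm (I.1 : Ideal (𝓞 K)) / X)) =
      ∑' P : PrJ K J, g (Real.log (Ideal.absNorm P.1 / (X * NJ))) := by
    intro X hX
    rw [hE X hX]
    exact e.tsum_eq (fun P : PrJ K J => g (Real.log (Ideal.absNorm P.1 / (X * NJ))))
  constructor
  · intro X hX
    rw [hE X hX, Equiv.summable_iff, ← hT X hX]
    exact hs _ (by positivity)
  · intro X hX m hm
    have hX0 : 0 < X := by linarith
    have hm0 : (0 : ℝ) < m := by exact_mod_cast hm
    have hXN : 1 ≤ X * NJ := one_le_mul_of_one_le_of_one_le hX hNJ1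
    have h1 := hl ((X * NJ) ^ (1 / (n : ℝ))) (Real.one_le_rpow hXN (by positivity)) m hm
    rw [mul_pow, hT X hX0] at h1
    rw [hE2 X hX0, hE2 _ (by positivity), mul_assoc]
    refine h1.trans (le_of_eq ?_)
    have : X * NJ / (X * NJ) ^ (1 / (n : ℝ)) = X ^ (1 - 1 / (n : ℝ)) * NJ ^ (1 - 1 / (n : ℝ)) := by
      rw [← Real.mul_rpow hX0.le hNJ0.le, Real.rpow_sub (by positivity), Real.rpow_one]
    rw [this]
    ring

lemma G2 : ∃ D : ℝ, 0 ≤ D ∧ ∀ (g : ℝ → ℝ) (L : ℝ), 1 ≤ L →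
    (∀ t, 0 ≤ g t ∧ g t ≤ 1) → (∀ s t, |g s - g t| ≤ L * |s - t|) → (∀ t, g t ≠ 0 → |t| ≤ 2) →
    (∀ X : ℝ, 0 < X → Summable fun I : (Ideal (𝓞 K))⁰ =>
        g (Real.log (Ideal.absNorm (I : Ideal (𝓞 K)) / X))) ∧
    ∀ X : ℝ, 1 ≤ X → ∀ m : ℕ, 1 ≤ m →
      |SK K g (m ^ finrank ℚ K * X) - (m : ℝ) ^ finrank ℚ K * SK K g X| ≤
        D * L * ((m : ℝ) ^ finrank ℚ K * X ^ (1 - 1 / (finrank ℚ K : ℝ))) := by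
  classical
  choose D hD h using G2C K
  refine ⟨∑ C, D C, Finset.sum_nonneg fun C _ => hD C, ?_⟩
  intro g L hL hg1 hg2 hg3
  have hs := fun C => (h C g L hL hg1 hg2 hg3).1
  have hl := fun C => (h C g L hL hg1 hg2 hg3).2
  let ind : ℝ → ClassGroup (𝓞 K) → (Ideal (𝓞 K))⁰ → ℝ := fun X C =>
    Set.indicator {I | ClassGroup.mk0 I = C}
      (fun I => g (Real.log (Ideal.absNorm (I : Ideal (𝓞 K)) / X)))
  have hind : ∀ X, 0 < X → ∀ C, Summable (ind X C) := by
    intro X hX C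
    have := hs C X hX
    exact summable_subtype_iff_indicator.mp this
  have hsumind : ∀ X (I : (Ideal (𝓞 K))⁰), g (Real.log (Ideal.absNorm (I : Ideal (𝓞 K)) / X)) = ∑ C, ind X C I := by
    intro X I
    rw [Finset.sum_eq_single (ClassGroup.mk0 I)]
    · simp [ind]
    · intro C _ hC
      simp only [ind]
      rw [Set.indicator_of_notMem]
      exact fun h => hC h.symm
    · simp
  have hSK : ∀ X, 0 < X → SK K g X = ∑ C, ∑' I : {I : (Ideal (𝓞 K))⁰ // ClassGroup.mk0 I = C},
          g (Real.log (Ideal.absNorm (I.1 : Ideal (𝓞 K)) / X)) := by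
    intro X hX
    unfold SK
    simp_rw [hsumind X]
    rw [Summable.tsum_finsetSum (fun C _ => hind X hX C)]
    refine Finset.sum_congr rfl fun C _ => ?_
    simp_rw [← hsumind X]
    exact (tsum_subtype {I | ClassGroup.mk0 I = C}
      (fun I : (Ideal (𝓞 K))⁰ => g (Real.log (Ideal.absNorm (I : Ideal (𝓞 K)) / X)))).symm
  constructor
  · intro X hX
    simp_rw [hsumind X]
    exact summable_sum fun C _ => hind X hX C
  · intro X hX m hm
    have hX0 : 0 < X := by linarith
    have hm0 : (0 : ℝ) < m := by exact_mod_cast hm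
    rw [hSK X hX0, hSK _ (by positivity), Finset.mul_sum, ← Finset.sum_sub_distrib]
    refine (Finset.abs_sum_le_sum_abs _ _).trans ?_
    rw [Finset.sum_mul, Finset.sum_mul]
    exact Finset.sum_le_sum fun C _ => hl C X hX m hm

end
end

noncomputable section
section
variable (K : Type*) [Field K] [NumberField K]
open Module
open scoped nonZeroDivisors

def cnt0 (x : ℝ) : ℝ :=
  (Nat.card {I : (Ideal (𝓞 K))⁰ // (Ideal.absNorm (I : Ideal (𝓞 K)) : ℝ) ≤ x} : ℝ)

lemma fin0 (x : ℝ) : {I : (Ideal (𝓞 K))⁰ | (Ideal.absNorm (I : Ideal (𝓞 K)) : ℝ) ≤ x}.Finite := by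
  refine (Ideal.finite_setOfPred_absNorm_le₀ (S := 𝓞 K) ⌊x⌋₊).subset ?_
  intro I hI
  exact Nat.le_floor hI

def fset0 (x : ℝ) : Finset (Ideal (𝓞 K))⁰ := (fin0 K x).toFinset

lemma mem_fset0 (x : ℝ) (I) : I ∈ fset0 K x ↔ (Ideal.absNorm (I : Ideal (𝓞 K)) : ℝ) ≤ x := by
  simp [fset0]

lemma cnt0_eq (x : ℝ) : cnt0 K x = (fset0 K x).card := by
  unfold cnt0 fset0
  have := Nat.card_coe_set_eq {I : (Ideal (𝓞 K))⁰ | (Ideal.absNorm (I : Ideal (𝓞 K)) : ℝ) ≤ x}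
  rw [← Set.ncard_eq_toFinset_card _ (fin0 K x), ← this]
  rfl

lemma cnt0_sub {a b : ℝ} (hab : a ≤ b) [DecidableEq (Ideal (𝓞 K))⁰] :
    cnt0 K b - cnt0 K a = (fset0 K b \ fset0 K a).card := by
  have hs : fset0 K a ⊆ fset0 K b := by
    intro I
    rw [mem_fset0, mem_fset0]
    intro h
    linarith
  rw [Finset.card_sdiff_of_subset hs, Nat.cast_sub (Finset.card_le_card hs), cnt0_eq, cnt0_eq]

lemma norm0_pos (I : (Ideal (𝓞 K))⁰) : (1 : ℝ) ≤ Ideal.absNorm (I : Ideal (𝓞 K)) := by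
  exact_mod_cast Nat.one_le_iff_ne_zero.mpr (Ideal.absNorm_ne_zero_of_nonZeroDivisors I)

lemma SK_upper (g : ℝ → ℝ) (hg : ∀ t, 0 ≤ g t ∧ g t ≤ 1) (a b : ℝ) (hab : a ≤ b)
    (hs : ∀ t, g t ≠ 0 → a < t ∧ t ≤ b) (X : ℝ) (hX : 0 < X) :
    SK K g X ≤ cnt0 K (Real.exp b * X) - cnt0 K (Real.exp a * X) := by
  classical
  have h1 : Real.exp a * X ≤ Real.exp b * X := by gcongr
  rw [cnt0_sub K h1, SK, tsum_eq_sum (s := fset0 K (Real.exp b * X) \ fset0 K (Real.exp a * X))]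
  · refine (Finset.sum_le_card_nsmul _ _ 1 (fun I _ => (hg _).2)).trans ?_
    simp
  · intro I hI
    by_contra h
    apply hI
    have h2 := hs _ h
    have h3 := norm0_pos K I
    have h4 : 0 < (Ideal.absNorm (I : Ideal (𝓞 K)) : ℝ) / X := by positivity
    rw [Real.lt_log_iff_exp_lt h4, Real.log_le_iff_le_exp h4, lt_div_iff₀ hX, div_le_iff₀ hX] at h2
    rw [Finset.mem_sdiff, mem_fset0, mem_fset0]
    exact ⟨h2.2, not_le.mpr h2.1⟩

lemma SK_lower (g : ℝ → ℝ) (hg : ∀ t, 0 ≤ g t ∧ g t ≤ 1) (a b : ℝ) (hab : a ≤ b)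
    (hs : ∀ t, a < t → t ≤ b → g t = 1) (X : ℝ) (hX : 0 < X)
    (hsum : Summable fun I : (Ideal (𝓞 K))⁰ =>
        g (Real.log (Ideal.absNorm (I : Ideal (𝓞 K)) / X))) :
    cnt0 K (Real.exp b * X) - cnt0 K (Real.exp a * X) ≤ SK K g X := by
  classical
  have h1 : Real.exp a * X ≤ Real.exp b * X := by gcongr
  rw [cnt0_sub K h1, SK]
  refine le_trans ?_ (hsum.sum_le_tsum (fset0 K (Real.exp b * X) \ fset0 K (Real.exp a * X))
    (fun I _ => (hg _).1))
  have e : ∀ I ∈ fset0 K (Real.exp b * X) \ fset0 K (Real.exp a * X),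
      g (Real.log (Ideal.absNorm (I : Ideal (𝓞 K)) / X)) = 1 := by
    intro I hI
    rw [Finset.mem_sdiff, mem_fset0, mem_fset0, not_le] at hI
    have h3 := norm0_pos K I
    have h4 : 0 < (Ideal.absNorm (I : Ideal (𝓞 K)) : ℝ) / X := by positivity
    apply hs
    · rw [Real.lt_log_iff_exp_lt h4, lt_div_iff₀ hX]
      exact hI.2
    · rw [Real.log_le_iff_le_exp h4, div_le_iff₀ hX]
      exact hI.1
  rw [Finset.sum_congr rfl e]
  simp

def kapM : ℝ := (2 ^ InfinitePlace.nrRealPlaces K * (2 * Real.pi) ^ InfinitePlace.nrComplexPlaces K *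
  Units.regulator K * classNumber K) / (Units.torsionOrder K * Real.sqrt |discr K|)

lemma kapM_pos : 0 < kapM K := by
  unfold kapM
  have h1 := Units.regulator_pos K
  have h2 : 0 < classNumber K := Fintype.card_pos
  have h3 : 0 < Units.torsionOrder K := Nat.pos_of_ne_zero (Units.torsionOrder_ne_zero K)
  have h4 : 0 < |(discr K : ℝ)| := abs_pos.mpr (by exact_mod_cast discr_ne_zero K)
  have h5 := Real.pi_pos
  positivity

lemma cnt0_lim (b X : ℝ) (hX : 0 < X) :
    Tendsto (fun m : ℕ => cnt0 K (Real.exp b * ((m : ℝ) ^ finrank ℚ K * X)) / (m : ℝ) ^ finrank ℚ K)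
      atTop (𝓝 (kapM K * (Real.exp b * X))) := by
  have h1 : Tendsto (fun m : ℕ => Real.exp b * ((m : ℝ) ^ finrank ℚ K * X)) atTop atTop := by
    apply Tendsto.const_mul_atTop (Real.exp_pos b)
    apply Tendsto.atTop_mul_const hX
    exact (tendsto_pow_atTop finrank_pos.ne').comp tendsto_natCast_atTop_atTop
  have h2 := ((Ideal.tendsto_norm_le_div_atTop₀ K).comp h1).mul_const (Real.exp b * X)
  refine h2.congr' ?_
  filter_upwards [eventually_ge_atTop 1] with m hm
  have hm0 : (0 : ℝ) < m := by exact_mod_cast hm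
  simp only [Function.comp_apply, cnt0]
  have := Real.exp_pos b
  field_simp

/-- one dyadic block -/
lemma block : ∃ D : ℝ, 0 ≤ D ∧ ∀ X : ℝ, 1 ≤ X → ∀ η : ℝ, 0 < η → η ≤ 1 / 4 →
    |cnt0 K X - cnt0 K (X / 2) - kapM K * X / 2| ≤
      D * (η * X + X ^ (1 - 1 / (finrank ℚ K : ℝ)) / η) := by
  obtain ⟨D, hD, h⟩ := G2 K
  have hk := kapM_pos K
  refine ⟨D + 4 * kapM K, by positivity, ?_⟩
  intro X hX η hη hη1
  have hX0 : 0 < X := by linarith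
  set n := finrank ℚ K with hn
  set E := X ^ (1 - 1 / (n : ℝ)) with hE
  have hE0 : 0 ≤ E := by positivity
  have hlog1 := Real.log_two_gt_d9
  have hlog2 := Real.log_two_lt_d9
  have hL : (1 : ℝ) ≤ 1 / η := by
    rw [le_div_iff₀ hη]
    linarith
  have hexp2 : Real.exp (-Real.log 2) = 1 / 2 := by
    rw [Real.exp_neg, Real.exp_log (by norm_num)]
    norm_num
  have e1 : Real.exp η ≤ 1 + 2 * η := by
    have := Real.abs_exp_sub_one_le (x := η) (by rw [abs_of_pos hη]; linarith)
    rw [abs_of_pos hη] at this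
    have := (abs_le.mp this).2
    linarith
  have e2 : 1 - η ≤ Real.exp (-η) := by linarith [Real.add_one_le_exp (-η)]
  -- upper
  have hup : cnt0 K X - cnt0 K (X / 2) ≤ kapM K * X * (Real.exp η - Real.exp (-η) / 2) +
      D * (1 / η) * E := by
    set g := trapF (-Real.log 2 - η) η η with hg
    have hgs : ∀ t, g t ≠ 0 → |t| ≤ 2 := by
      intro t ht
      have := trapF_supp hη ht
      rw [abs_le]
      constructor <;> linarith
    obtain ⟨hs, hl⟩ := h g (1 / η) hL (trapF_01 _ _ _) (trapF_lip _ _ _ hη) hgs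
    have h1 : cnt0 K X - cnt0 K (X / 2) ≤ SK K g X := by
      have := SK_lower K g (trapF_01 _ _ _) (-Real.log 2) 0 (by linarith)
        (fun t h1 h2 => trapF_one hη (by linarith) (by linarith)) X hX0 (hs X hX0)
      rw [hexp2, Real.exp_zero, one_mul] at this
      have e : 1 / 2 * X = X / 2 := by ring
      rwa [e] at this
    have h2 : ∀ m : ℕ, 1 ≤ m → SK K g X ≤
        cnt0 K (Real.exp η * ((m : ℝ) ^ n * X)) / (m : ℝ) ^ n -
        cnt0 K (Real.exp (-Real.log 2 - η) * ((m : ℝ) ^ n * X)) / (m : ℝ) ^ n +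
        D * (1 / η) * E := by
      intro m hm
      have hm0 : (0 : ℝ) < m := by exact_mod_cast hm
      have h3 := SK_upper K g (trapF_01 _ _ _) (-Real.log 2 - η) η (by linarith)
        (fun t ht => ⟨(trapF_supp hη ht).1, (trapF_supp hη ht).2.le⟩) ((m : ℝ) ^ n * X)
        (by positivity)
      have h4 := (abs_le.mp (hl X hX m hm)).1
      have hmn : 0 < (m : ℝ) ^ n := by positivity
      rw [← sub_div, div_add' _ _ _ hmn.ne', le_div_iff₀ hmn]
      linarith
    have h3 : Tendsto (fun m : ℕ => cnt0 K (Real.exp η * ((m : ℝ) ^ n * X)) / (m : ℝ) ^ n -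
        cnt0 K (Real.exp (-Real.log 2 - η) * ((m : ℝ) ^ n * X)) / (m : ℝ) ^ n +
        D * (1 / η) * E) atTop (𝓝 (kapM K * (Real.exp η * X) -
          kapM K * (Real.exp (-Real.log 2 - η) * X) + D * (1 / η) * E)) :=
      ((cnt0_lim K _ X hX0).sub (cnt0_lim K _ X hX0)).add_const _
    have h4 := ge_of_tendsto h3 (by
      filter_upwards [eventually_ge_atTop 1] with m hm
      exact h2 m hm)
    have e3 : Real.exp (-Real.log 2 - η) = Real.exp (-η) / 2 := by
      rw [sub_eq_add_neg, Real.exp_add, hexp2]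
      ring
    rw [e3] at h4
    refine h1.trans (h4.trans (le_of_eq ?_))
    ring
  have hlo : kapM K * X * (Real.exp (-η) - Real.exp η / 2) - D * (1 / η) * E ≤
      cnt0 K X - cnt0 K (X / 2) := by
    set g := trapF (-Real.log 2) 0 η with hg
    have hgs : ∀ t, g t ≠ 0 → |t| ≤ 2 := by
      intro t ht
      have := trapF_supp hη ht
      rw [abs_le]
      constructor <;> linarith
    obtain ⟨hs, hl⟩ := h g (1 / η) hL (trapF_01 _ _ _) (trapF_lip _ _ _ hη) hgs
    have h1 : SK K g X ≤ cnt0 K X - cnt0 K (X / 2) := by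
      have := SK_upper K g (trapF_01 _ _ _) (-Real.log 2) 0 (by linarith)
        (fun t ht => ⟨(trapF_supp hη ht).1, (trapF_supp hη ht).2.le⟩) X hX0
      rw [hexp2, Real.exp_zero, one_mul] at this
      have e : 1 / 2 * X = X / 2 := by ring
      rwa [e] at this
    have h2 : ∀ m : ℕ, 1 ≤ m → 
        cnt0 K (Real.exp (-η) * ((m : ℝ) ^ n * X)) / (m : ℝ) ^ n -
        cnt0 K (Real.exp (-Real.log 2 + η) * ((m : ℝ) ^ n * X)) / (m : ℝ) ^ n -
        D * (1 / η) * E ≤ SK K g X := by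
      intro m hm
      have hm0 : (0 : ℝ) < m := by exact_mod_cast hm
      have hmn : 0 < (m : ℝ) ^ n := by positivity
      have h3 := SK_lower K g (trapF_01 _ _ _) (-Real.log 2 + η) (-η) (by linarith)
        (fun t h1 h2 => trapF_one hη (by linarith) (by linarith)) ((m : ℝ) ^ n * X)
        (by positivity) (hs _ (by positivity))
      have h4 := (abs_le.mp (hl X hX m hm)).2
      rw [← sub_div, div_sub' hmn.ne', div_le_iff₀ hmn]
      linarith
    have h3 : Tendsto (fun m : ℕ => cnt0 K (Real.exp (-η) * ((m : ℝ) ^ n * X)) / (m : ℝ) ^ n -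
        cnt0 K (Real.exp (-Real.log 2 + η) * ((m : ℝ) ^ n * X)) / (m : ℝ) ^ n -
        D * (1 / η) * E) atTop (𝓝 (kapM K * (Real.exp (-η) * X) -
          kapM K * (Real.exp (-Real.log 2 + η) * X) - D * (1 / η) * E)) :=
      ((cnt0_lim K _ X hX0).sub (cnt0_lim K _ X hX0)).sub_const _
    have h4 := le_of_tendsto h3 (by
      filter_upwards [eventually_ge_atTop 1] with m hm
      exact h2 m hm)
    have e3 : Real.exp (-Real.log 2 + η) = Real.exp η / 2 := by
      rw [Real.exp_add, hexp2]
      ring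
    rw [e3] at h4
    refine le_trans (le_of_eq ?_) (h4.trans h1)
    ring
  have hkX : 0 < kapM K * X := by positivity
  have p1 : kapM K * X * (Real.exp η - Real.exp (-η) / 2) ≤ kapM K * X * (1 / 2 + 4 * η) := by
    gcongr
    linarith
  have p2 : kapM K * X * (1 / 2 - 4 * η) ≤ kapM K * X * (Real.exp (-η) - Real.exp η / 2) :=
    mul_le_mul_of_nonneg_left (by linarith) hkX.le
  have p3 : 0 ≤ D * (η * X) := by positivity
  have p4 : 0 ≤ 4 * kapM K * (E / η) := by positivity
  have p5 : D * (1 / η) * E = D * (E / η) := by ring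
  rw [p5] at hup hlo
  rw [abs_le]
  constructor <;> nlinarith

lemma ideal_count : ∃ C δ : ℝ, 0 ≤ C ∧ 0 < δ ∧ δ < 1 / 2 ∧ ∀ x : ℝ, 0 < x →
    |cnt0 K x - kapM K * x| ≤ C * x ^ (1 - δ) := by
  obtain ⟨D, hD, h⟩ := block K
  have hk := kapM_pos K
  set n : ℝ := (finrank ℚ K : ℝ) with hn
  have hn1 : 1 ≤ n := by rw [hn]; exact_mod_cast finrank_pos (R := ℚ) (M := K)
  have hn0 : 0 < n := by linarith
  set δ : ℝ := 1 / (4 * n) with hδ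
  have hδ0 : 0 < δ := by positivity
  have hδ1 : δ ≤ 1 / 4 := by
    rw [hδ]
    gcongr
    linarith
  have hblock : ∀ X : ℝ, 1 ≤ X → |cnt0 K X - cnt0 K (X / 2) - kapM K * X / 2| ≤
      (D * 17) * X ^ (1 - δ) := by
    intro X hX
    have hX0 : 0 < X := by linarith
    have h1 := h X hX (1 / 4 * X ^ (-(2 * δ))) (by positivity) (by
      have := Real.rpow_le_one_of_one_le_of_nonpos hX (by linarith : -(2 * δ) ≤ 0)
      linarith)
    refine h1.trans ?_
    rw [mul_assoc D 17]
    apply mul_le_mul_of_nonneg_left _ hD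
    have a1 : 1 / 4 * X ^ (-(2 * δ)) * X = 1 / 4 * X ^ (1 - 2 * δ) := by
      rw [mul_assoc]
      congr 1
      nth_rewrite 2 [← Real.rpow_one X]
      rw [← Real.rpow_add hX0]
      congr 1
      ring
    have a2 : X ^ (1 - 1 / n) / (1 / 4 * X ^ (-(2 * δ))) = 4 * X ^ (1 - 2 * δ) := by
      have : 1 - 1 / n = (1 - 2 * δ) + -(2 * δ) := by
        rw [hδ]
        field_simp
        ring
      rw [this, Real.rpow_add hX0]
      have := Real.rpow_pos_of_pos hX0 (-(2 * δ))
      field_simp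
    rw [a1, a2]
    have a3 : X ^ (1 - 2 * δ) ≤ X ^ (1 - δ) := Real.rpow_le_rpow_of_exponent_le hX (by linarith)
    have a4 : 0 ≤ X ^ (1 - δ) := by positivity
    linarith
  have h2lt : (2 : ℝ) ^ (-(1 - δ)) < 1 := Real.rpow_lt_one_of_one_lt_of_neg (by norm_num) (by linarith)
  refine ⟨_, δ, ?_, hδ0, by linarith, dyadic (fun x => |cnt0 K x - kapM K * x|) (1 - δ) 2 1
    (2 ^ (-(1 - δ))) (kapM K) (D * 17) le_rfl zero_le_one h2lt ?_ hk.le (by positivity) ?_ ?_⟩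
  · have : 0 < 1 - (2 : ℝ) ^ (-(1 - δ)) := by linarith
    positivity
  · rw [← Real.rpow_add (by norm_num)]
    simp
  · intro x hx hx1
    have : cnt0 K x = 0 := by
      rw [cnt0_eq]
      have : fset0 K x = ∅ := by
        rw [Finset.eq_empty_iff_forall_notMem]
        intro I hI
        rw [mem_fset0] at hI
        linarith [norm0_pos K I]
      rw [this]
      simp
    simp only [this, zero_sub, abs_neg]
    rw [abs_of_pos (by positivity)]
    gcongr
    nth_rewrite 1 [← Real.rpow_one x]
    exact Real.rpow_le_rpow_of_exponent_ge hx hx1.le (by linarith)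
  · intro x hx
    have h1 := hblock x hx
    have e : cnt0 K x - kapM K * x = (cnt0 K (x / 2) - kapM K * (x / 2)) +
      (cnt0 K x - cnt0 K (x / 2) - kapM K * x / 2) := by ring
    simp only [one_mul]
    rw [e]
    exact (abs_add_le _ _).trans (by linarith)

end
end

noncomputable section

section generic
variable {ι : Type*} (F : ℝ → Finset ι) (N : ι → ℝ) (P : ι → Prop)

lemma wsum_bound (hF : ∀ x i, i ∈ F x ↔ P i ∧ N i ≤ x) (hN : ∀ i, P i → 1 ≤ N i)
    (w : ι → ℝ) (hw : ∀ i, P i → 0 ≤ w i) (C : ℝ) (hC : 0 ≤ C)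
    (hs : ∀ x, 0 < x → ∑ i ∈ F x, w i ≤ C * x) (a : ℝ) (ha0 : 0 ≤ a) (ha : a < 1) :
    ∃ D : ℝ, 0 ≤ D ∧ ∀ x, 0 < x → ∑ i ∈ F x, w i * (x / N i) ^ a ≤ D * x := by
  classical
  have h2lt : (2 : ℝ) ^ (a - 1) < 1 := Real.rpow_lt_one_of_one_lt_of_neg (by norm_num) (by linarith)
  have h1m : 0 < 1 - (2 : ℝ) ^ (a - 1) := by linarith
  have h := dyadic (fun x => ∑ i ∈ F x, w i * (x / N i) ^ a) 1 2 (2 ^ a) (2 ^ (a - 1)) 0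
    (2 ^ a * C) le_rfl (by positivity) h2lt (by
      rw [← Real.rpow_add (by norm_num)]
      simp) le_rfl (by positivity) ?_ ?_
  · refine ⟨_, ?_, fun x hx => by simpa only [Real.rpow_one] using h x hx⟩
    positivity
  · intro x hx hx1
    have : F x = ∅ := by
      rw [Finset.eq_empty_iff_forall_notMem]
      intro i hi
      rw [hF] at hi
      linarith [hN i hi.1]
    simp [this]
  · intro x hx
    have hx0 : 0 < x := by linarith
    have hsub : F (x / 2) ⊆ F x := by
      intro i hi
      rw [hF] at hi ⊢
      exact ⟨hi.1, by linarith⟩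
    simp only [Real.rpow_one]
    rw [← Finset.sum_sdiff hsub, add_comm, Finset.mul_sum]
    apply add_le_add
    · apply le_of_eq
      refine Finset.sum_congr rfl fun i hi => ?_
      have hi' := (hF _ _).mp hi
      have hNi := hN i hi'.1
      have : x / N i = 2 * (x / 2 / N i) := by field_simp
      rw [this, Real.mul_rpow (by norm_num) (by positivity)]
      ring
    · calc ∑ i ∈ F x \ F (x / 2), w i * (x / N i) ^ a ≤ ∑ i ∈ F x \ F (x / 2), 2 ^ a * w i := by
            apply Finset.sum_le_sum
            intro i hi
            rw [Finset.mem_sdiff, hF, hF] at hi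
            have hwi := hw i hi.1.1
            have hNi := hN i hi.1.1
            have h3 : x / 2 < N i := by
              by_contra h
              exact hi.2 ⟨hi.1.1, by linarith⟩
            have h4 : x / N i ≤ 2 := by
              rw [div_le_iff₀ (by linarith)]
              linarith
            rw [mul_comm]
            gcongr
        _ ≤ ∑ i ∈ F x, 2 ^ a * w i := by
            apply Finset.sum_le_sum_of_subset_of_nonneg Finset.sdiff_subset
            intro i hi _
            have := hw i ((hF _ _).mp hi).1
            positivity
        _ ≤ 2 ^ a * C * x := by
            rw [← Finset.mul_sum, mul_assoc]
            exact mul_le_mul_of_nonneg_left (hs x hx0) (by positivity)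

lemma tail_bound (hF : ∀ x i, i ∈ F x ↔ P i ∧ N i ≤ x)
    (w : ι → ℝ) (hw : ∀ i, P i → 0 ≤ w i) (C : ℝ) (hC : 0 ≤ C)
    (hs : ∀ x, 0 < x → ∑ i ∈ F x, w i ≤ C * x) (s : ℝ) (hs1 : 1 < s) :
    ∃ B : ℝ, 0 ≤ B ∧ ∀ x, 0 < x → ∀ T : Finset ι, (∀ i ∈ T, P i ∧ x < N i) →
      ∑ i ∈ T, w i * N i ^ (-s) ≤ B * x ^ (1 - s) := by
  classical
  have h2lt : (2 : ℝ) ^ (1 - s) < 1 := Real.rpow_lt_one_of_one_lt_of_neg (by norm_num) (by linarith)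
  have h1m : 0 < 1 - (2 : ℝ) ^ (1 - s) := by linarith
  set B := 2 * C / (1 - (2 : ℝ) ^ (1 - s)) with hB
  have hB0 : 0 ≤ B := by positivity
  have hBe : B = 2 * C + B * 2 ^ (1 - s) := by
    rw [hB]
    field_simp
    ring
  have key : ∀ k : ℕ, ∀ x, 0 < x → ∀ T : Finset ι, (∀ i ∈ T, P i ∧ x < N i ∧ N i ≤ 2 ^ k * x) →
      ∑ i ∈ T, w i * N i ^ (-s) ≤ B * x ^ (1 - s) := by
    intro k
    induction k with
    | zero =>
      intro x hx T hT
      have : T = ∅ := by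
        rw [Finset.eq_empty_iff_forall_notMem]
        intro i hi
        have := hT i hi
        norm_num at this
        linarith
      rw [this, Finset.sum_empty]
      positivity
    | succ k ih =>
      intro x hx T hT
      rw [← Finset.sum_filter_add_sum_filter_not T (fun i => N i ≤ 2 * x)]
      have e1 : ∑ i ∈ T with N i ≤ 2 * x, w i * N i ^ (-s) ≤ 2 * C * x ^ (1 - s) := by
        calc ∑ i ∈ T with N i ≤ 2 * x, w i * N i ^ (-s)
            ≤ ∑ i ∈ T with N i ≤ 2 * x, w i * x ^ (-s) := by
              apply Finset.sum_le_sum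
              intro i hi
              rw [Finset.mem_filter] at hi
              have h1 := hT i hi.1
              have := hw i h1.1
              apply mul_le_mul_of_nonneg_left _ this
              exact Real.rpow_le_rpow_of_nonpos hx h1.2.1.le (by linarith)
          _ ≤ ∑ i ∈ F (2 * x), w i * x ^ (-s) := by
              apply Finset.sum_le_sum_of_subset_of_nonneg
              · intro i hi
                rw [Finset.mem_filter] at hi
                rw [hF]
                exact ⟨(hT i hi.1).1, hi.2⟩
              · intro i hi _
                have := hw i ((hF _ _).mp hi).1
                positivity
          _ ≤ C * (2 * x) * x ^ (-s) := by
              rw [← Finset.sum_mul]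
              exact mul_le_mul_of_nonneg_right (hs _ (by positivity)) (by positivity)
          _ = 2 * C * x ^ (1 - s) := by
              rw [sub_eq_add_neg, Real.rpow_add hx, Real.rpow_one]
              ring
      have e2 := ih (2 * x) (by positivity) (T.filter (fun i => ¬ N i ≤ 2 * x)) (by
        intro i hi
        rw [Finset.mem_filter] at hi
        have h1 := hT i hi.1
        refine ⟨h1.1, not_le.mp hi.2, ?_⟩
        have := h1.2.2
        rw [pow_succ] at this
        linarith)
      rw [Real.mul_rpow (by norm_num) hx.le] at e2
      rw [hBe]
      linarith
  refine ⟨B, hB0, ?_⟩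
  intro x hx T hT
  obtain ⟨M, hM⟩ : ∃ M : ℝ, ∀ i ∈ T, N i ≤ M := by
    obtain ⟨M, hM⟩ := (T.image N).bddAbove
    exact ⟨M, fun i hi => hM (by simpa using ⟨i, hi, rfl⟩)⟩
  obtain ⟨k, hk⟩ := pow_unbounded_of_one_lt (M / x) (by norm_num : (1 : ℝ) < 2)
  rw [div_lt_iff₀ hx] at hk
  exact key k x hx T fun i hi => ⟨(hT i hi).1, (hT i hi).2, by linarith [hM i hi]⟩

end generic

section
variable (K : Type*) [Field K] [NumberField K]
open scoped nonZeroDivisors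

variable {K} in
/-- real norm -/
def nm (I : Ideal (𝓞 K)) : ℝ := (Ideal.absNorm I : ℝ)

variable {K} in
def isP (p : Ideal (𝓞 K)) : Prop := p.IsPrime ∧ p ≠ ⊥

lemma finI (x : ℝ) : {I : Ideal (𝓞 K) | I ≠ ⊥ ∧ nm I ≤ x}.Finite := by
  refine ((fin0 K x).image (fun I : (Ideal (𝓞 K))⁰ => (I : Ideal (𝓞 K)))).subset ?_
  rintro I ⟨h1, h2⟩
  exact ⟨⟨I, mem_nonZeroDivisors_of_ne_zero h1⟩, h2, rfl⟩

def idl (x : ℝ) : Finset (Ideal (𝓞 K)) := (finI K x).toFinset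

open scoped Classical in
def prm (x : ℝ) : Finset (Ideal (𝓞 K)) := (idl K x).filter isP

variable {K}

lemma mem_idl {x : ℝ} {I : Ideal (𝓞 K)} : I ∈ idl K x ↔ I ≠ ⊥ ∧ nm I ≤ x := by
  simp [idl]

lemma mem_prm {x : ℝ} {p : Ideal (𝓞 K)} : p ∈ prm K x ↔ isP p ∧ nm p ≤ x := by
  simp only [prm, Finset.mem_filter, mem_idl, isP]
  tauto

lemma nm_mul (I J : Ideal (𝓞 K)) : nm (I * J) = nm I * nm J := by
  simp [nm]

lemma nm_pow (I : Ideal (𝓞 K)) (k : ℕ) : nm (I ^ k) = nm I ^ k := by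
  simp [nm]

lemma one_le_nm {I : Ideal (𝓞 K)} (h : I ≠ ⊥) : 1 ≤ nm I := by
  have := norm0_pos K ⟨I, mem_nonZeroDivisors_of_ne_zero h⟩
  exact this

lemma nm_pos {I : Ideal (𝓞 K)} (h : I ≠ ⊥) : 0 < nm I := by linarith [one_le_nm h]

lemma nm_le_of_dvd {I J : Ideal (𝓞 K)} (hJ : J ≠ ⊥) (h : I ∣ J) : nm I ≤ nm J := by
  obtain ⟨L, rfl⟩ := h
  have hI : I ≠ ⊥ := by rintro rfl; simp at hJ
  have hL : L ≠ ⊥ := by rintro rfl; simp at hJ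
  rw [nm_mul]
  exact le_mul_of_one_le_right (nm_pos hI).le (one_le_nm hL)

lemma nm_top : nm (⊤ : Ideal (𝓞 K)) = 1 := by simp [nm]

lemma nm_eq_one {I : Ideal (𝓞 K)} (h : nm I = 1) : I = ⊤ := by
  unfold nm at h
  exact Ideal.absNorm_eq_one_iff.mp (by exact_mod_cast h)

lemma two_le_nm {I : Ideal (𝓞 K)} (h : I ≠ ⊥) (h' : I ≠ ⊤) : 2 ≤ nm I := by
  have h1 := one_le_nm h
  have h2 : Ideal.absNorm I ≠ 1 := fun h3 => h' (Ideal.absNorm_eq_one_iff.mp h3)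
  unfold nm at *
  have h4 : 1 ≤ Ideal.absNorm I := by exact_mod_cast h1
  exact_mod_cast (by omega : 2 ≤ Ideal.absNorm I)

lemma isP.two_le {p : Ideal (𝓞 K)} (h : isP p) : 2 ≤ nm p := two_le_nm h.2 h.1.ne_top

lemma isP.prime {p : Ideal (𝓞 K)} (h : isP p) : Prime p := (Ideal.prime_iff_isPrime h.2).mpr h.1

lemma prime_isP {p : Ideal (𝓞 K)} (h : Prime p) : isP p := ⟨Ideal.isPrime_of_prime h, h.ne_zero⟩

lemma exists_isP_dvd {I : Ideal (𝓞 K)} (h : I ≠ ⊤) : ∃ p, p.IsPrime ∧ p ∣ I := by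
  obtain ⟨m, hm, h1⟩ := Ideal.exists_le_maximal I h
  exact ⟨m, hm.isPrime, Ideal.dvd_iff_le.mpr h1⟩

lemma idl_card (x : ℝ) : ((idl K x).card : ℝ) = cnt0 K x := by
  classical
  rw [cnt0_eq]
  congr 1
  symm
  apply Finset.card_bij (fun (I : (Ideal (𝓞 K))⁰) _ => (I : Ideal (𝓞 K)))
  · intro I hI
    rw [mem_fset0] at hI
    exact mem_idl.mpr ⟨nonZeroDivisors.coe_ne_zero I, hI⟩
  · intro I _ J _ h
    exact Subtype.ext h
  · intro I hI
    rw [mem_idl] at hI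
    exact ⟨⟨I, mem_nonZeroDivisors_of_ne_zero hI.1⟩, (mem_fset0 K x _).mpr hI.2, rfl⟩

/-- reindexing of sums over multiples -/
lemma sum_mult (J : Ideal (𝓞 K)) (hJ : J ≠ ⊥) (x : ℝ) (f : Ideal (𝓞 K) → ℝ)
    (hf : ∀ I, I ≠ ⊥ → ¬ J ∣ I → f I = 0) :
    ∑ I ∈ idl K x, f I = ∑ I ∈ idl K (x / nm J), f (J * I) := by
  symm
  have hJ0 := nm_pos hJ
  apply Finset.sum_of_injOn (fun I => J * I)
  · intro I _ I' _ h
    exact mul_left_cancel₀ (show J ≠ 0 from hJ) h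
  · intro I hI
    rw [Finset.mem_coe, mem_idl] at hI ⊢
    refine ⟨mul_ne_zero hJ hI.1, ?_⟩
    rw [nm_mul, mul_comm]
    exact (le_div_iff₀ hJ0).mp hI.2
  · intro I hI hI2
    rw [mem_idl] at hI
    apply hf I hI.1
    rintro ⟨L, rfl⟩
    apply hI2
    refine ⟨L, ?_, rfl⟩
    rw [Finset.mem_coe, mem_idl]
    have hL : L ≠ ⊥ := by rintro rfl; simp at hI
    refine ⟨hL, ?_⟩
    rw [le_div_iff₀ hJ0, mul_comm, ← nm_mul]
    exact hI.2
  · intro I _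
    rfl

lemma idl_empty {x : ℝ} (hx : x < 1) : idl K x = ∅ := by
  rw [Finset.eq_empty_iff_forall_notMem]
  intro I hI
  rw [mem_idl] at hI
  linarith [one_le_nm hI.1]

lemma rpow_sub_pow {x a : ℝ} (hx : 0 < x) (hx1 : x ≤ 1) (ha : a ≤ 1) : x ≤ x ^ a := by
  nth_rewrite 1 [← Real.rpow_one x]
  exact Real.rpow_le_rpow_of_exponent_ge hx hx1 ha

end
end

noncomputable section
set_option linter.unusedSectionVars false

section
variable {K : Type*} [Field K] [NumberField K]

lemma exists_rat_prime (p : Ideal (𝓞 K)) (hp : p.IsPrime) (n : ℕ) :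
    n ≠ 0 → (n : 𝓞 K) ∈ p → ∃ q : ℕ, q.Prime ∧ (q : 𝓞 K) ∈ p ∧ q ≤ n := by
  induction n using induction_on_primes with
  | zero => intro h; exact absurd rfl h
  | one =>
    intro _ h
    rw [Nat.cast_one] at h
    exact absurd (p.eq_top_iff_one.mpr h) hp.ne_top
  | prime_mul q a hq ih =>
    intro h0 hm
    have ha : a ≠ 0 := by rintro rfl; simp at h0
    rw [Nat.cast_mul] at hm
    rcases hp.mem_or_mem hm with h | h
    · exact ⟨q, hq, h, Nat.le_mul_of_pos_right _ (Nat.pos_of_ne_zero ha)⟩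
    · obtain ⟨r, hr, h1, h2⟩ := ih ha h
      exact ⟨r, hr, h1, h2.trans (Nat.le_mul_of_pos_left _ hq.pos)⟩

lemma nm_prod {ι : Type*} (s : Finset ι) (f : ι → Ideal (𝓞 K)) :
    nm (∏ i ∈ s, f i) = ∏ i ∈ s, nm (f i) := by
  simp [nm, map_prod]

lemma cheb (y : ℝ) (hy : 0 < y) :
    ∑ p ∈ prm K y, Real.log (nm p) ≤ (Module.finrank ℤ (𝓞 K) * Real.log 4) * y := by
  classical
  have hex : ∀ p : Ideal (𝓞 K), ∃ q : ℕ, isP p → (q.Prime ∧ (q : 𝓞 K) ∈ p ∧ (q : ℝ) ≤ nm p) := by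
    intro p
    by_cases h : isP p
    · obtain ⟨q, h1, h2, h3⟩ := exists_rat_prime p h.1 (Ideal.absNorm p) (by
        have := h.two_le
        unfold nm at this
        intro h0
        rw [h0] at this
        norm_num at this) (Ideal.absNorm_mem p)
      exact ⟨q, fun _ => ⟨h1, h2, by unfold nm; exact_mod_cast h3⟩⟩
    · exact ⟨0, fun h' => absurd h' h⟩
  choose g hg using hex
  have hmap : ∀ p ∈ prm K y, g p ∈ (Finset.Ioc 0 ⌊y⌋₊).filter Nat.Prime := by
    intro p hp
    rw [mem_prm] at hp
    obtain ⟨h1, h2, h3⟩ := hg p hp.1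
    rw [Finset.mem_filter, Finset.mem_Ioc]
    exact ⟨⟨h1.pos, Nat.le_floor (h3.trans hp.2)⟩, h1⟩
  rw [← Finset.sum_fiberwise_of_maps_to hmap]
  have hth := Chebyshev.theta_le_log4_mul_x hy.le
  unfold Chebyshev.theta at hth
  calc _ ≤ ∑ q ∈ (Finset.Ioc 0 ⌊y⌋₊).filter Nat.Prime, Module.finrank ℤ (𝓞 K) * Real.log (q : ℝ) := by
        apply Finset.sum_le_sum
        intro q hq
        rw [Finset.mem_filter] at hq
        have hq0 : q ≠ 0 := hq.2.ne_zero
        set s := (prm K y).filter (fun p => g p = q)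
        have hs : ∀ p ∈ s, isP p ∧ (q : 𝓞 K) ∈ p := by
          intro p hp
          rw [Finset.mem_filter, mem_prm] at hp
          exact ⟨hp.1.1, hp.2 ▸ (hg p hp.1.1).2.1⟩
        have hd : ∏ p ∈ s, p ∣ Ideal.span {(q : 𝓞 K)} := by
          apply Finset.prod_primes_dvd
          · intro p hp; exact (hs p hp).1.prime
          · intro p hp
            rw [Ideal.dvd_span_singleton]
            exact (hs p hp).2
        have hne : Ideal.span {(q : 𝓞 K)} ≠ ⊥ := by
          rw [Ne, Ideal.span_singleton_eq_bot]
          exact_mod_cast hq0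
        have h1 := nm_le_of_dvd hne hd
        rw [nm_prod] at h1
        have h2 : nm (Ideal.span {(q : 𝓞 K)}) = (q : ℝ) ^ Module.finrank ℤ (𝓞 K) := by
          unfold nm
          rw [Ideal.absNorm_span_natCast]
          push_cast
          rfl
        rw [h2] at h1
        rw [← Real.log_prod (fun p hp => (nm_pos (hs p hp).1.2).ne'), ← Real.log_pow]
        apply Real.log_le_log _ h1
        exact Finset.prod_pos fun p hp => nm_pos (hs p hp).1.2
    _ = Module.finrank ℤ (𝓞 K) * ∑ q ∈ (Finset.Ioc 0 ⌊y⌋₊).filter Nat.Prime, Real.log (q : ℝ) := by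
        rw [Finset.mul_sum]
    _ ≤ _ := by
        rw [mul_assoc]
        exact mul_le_mul_of_nonneg_left hth (by positivity)

variable (K) in
def chC : ℝ := Module.finrank ℤ (𝓞 K) * Real.log 4

variable (K) in
lemma chC_nonneg : 0 ≤ chC K := by unfold chC; positivity

variable (K) in
lemma wsumP (a : ℝ) (ha0 : 0 ≤ a) (ha : a < 1) :
    ∃ D : ℝ, 0 ≤ D ∧ ∀ x, 0 < x → ∑ p ∈ prm K x, Real.log (nm p) * (x / nm p) ^ a ≤ D * x :=
  wsum_bound (prm K) nm isP (fun _ _ => mem_prm) (fun p hp => by linarith [hp.two_le])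
    (fun p => Real.log (nm p)) (fun p hp => Real.log_nonneg (by linarith [hp.two_le]))
    (chC K) (chC_nonneg K) cheb a ha0 ha

variable (K) in
lemma tailP (s : ℝ) (hs : 1 < s) :
    ∃ B : ℝ, 0 ≤ B ∧ ∀ x, 0 < x → ∀ T : Finset (Ideal (𝓞 K)), (∀ i ∈ T, isP i ∧ x < nm i) →
      ∑ i ∈ T, Real.log (nm i) * nm i ^ (-s) ≤ B * x ^ (1 - s) :=
  tail_bound (prm K) nm isP (fun _ _ => mem_prm) 
    (fun p => Real.log (nm p)) (fun p hp => Real.log_nonneg (by linarith [hp.two_le]))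
    (chC K) (chC_nonneg K) cheb s hs

variable (K) in
lemma idl_count : ∃ C δ : ℝ, 0 ≤ C ∧ 0 < δ ∧ δ < 1/2 ∧ ∀ x : ℝ, 0 < x →
    |((idl K x).card : ℝ) - kapM K * x| ≤ C * x ^ (1 - δ) := by
  obtain ⟨C, δ, h1, h2, h3, h4⟩ := ideal_count K
  exact ⟨C, δ, h1, h2, h3, fun x hx => by rw [idl_card]; exact h4 x hx⟩

variable (K) in
lemma idl_le : ∃ C : ℝ, 0 ≤ C ∧ ∀ x : ℝ, 0 < x → ((idl K x).card : ℝ) ≤ C * x := by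
  obtain ⟨C, δ, h1, h2, h3, h4⟩ := idl_count K
  have hk := kapM_pos K
  refine ⟨C + kapM K, by positivity, fun x hx => ?_⟩
  rcases lt_or_ge x 1 with h | h
  · rw [idl_empty h]
    simp
    positivity
  · have h5 := (abs_le.mp (h4 x hx)).2
    have h6 : x ^ (1 - δ) ≤ x := by
      have := Real.rpow_le_rpow_of_exponent_le h (show 1 - δ ≤ 1 by linarith)
      rwa [Real.rpow_one] at this
    nlinarith

variable (K) in
lemma wsumI (a : ℝ) (ha0 : 0 ≤ a) (ha : a < 1) :
    ∃ D : ℝ, 0 ≤ D ∧ ∀ x, 0 < x → ∑ p ∈ idl K x, (x / nm p) ^ a ≤ D * x := by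
  obtain ⟨C, hC, h⟩ := idl_le K
  simpa only [one_mul] using wsum_bound (idl K) nm (fun I => I ≠ ⊥) (fun _ _ => mem_idl)
    (fun p hp => one_le_nm hp)
    (fun p => 1) (fun p hp => zero_le_one)
    C hC (by simpa using h) a ha0 ha

variable (K) in
lemma tailI (s : ℝ) (hs : 1 < s) :
    ∃ B : ℝ, 0 ≤ B ∧ ∀ x, 0 < x → ∀ T : Finset (Ideal (𝓞 K)), (∀ i ∈ T, i ≠ ⊥ ∧ x < nm i) →
      ∑ i ∈ T, nm i ^ (-s) ≤ B * x ^ (1 - s) := by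
  obtain ⟨C, hC, h⟩ := idl_le K
  simpa only [one_mul] using tail_bound (idl K) nm (fun I => I ≠ ⊥) (fun _ _ => mem_idl)
    (fun p => 1) (fun p hp => zero_le_one)
    C hC (by simpa using h) s hs
end
end

noncomputable section
set_option linter.unusedSectionVars false

section
variable {K : Type*} [Field K] [NumberField K]
open UniqueFactorizationMonoid

open scoped Classical in
def vv (p m : Ideal (𝓞 K)) : ℕ := Multiset.count p (normalizedFactors m)

lemma vv_mul {p I : Ideal (𝓞 K)} (hp : isP p) (hI : I ≠ ⊥) : vv p (p * I) = 1 + vv p I := by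
  classical
  unfold vv
  rw [normalizedFactors_mul hp.2 hI, normalizedFactors_irreducible hp.prime.irreducible,
    normalize_eq, Multiset.count_add, Multiset.count_singleton_self]

lemma vv_zero {p I : Ideal (𝓞 K)} (h : ¬ p ∣ I) : vv p I = 0 := by
  classical
  unfold vv
  rw [Multiset.count_eq_zero]
  intro h'
  exact h (dvd_of_mem_normalizedFactors h')

lemma log_nm_eq {x : ℝ} {m : Ideal (𝓞 K)} (hm : m ∈ idl K x) :
    Real.log (nm m) = ∑ p ∈ prm K x, Real.log (nm p) * vv p m := by
  classical
  rw [mem_idl] at hm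
  have h1 : m = ∏ p ∈ (normalizedFactors m).toFinset, p ^ vv p m := by
    have := Ideal.prod_normalizedFactors_eq_self hm.1
    nth_rewrite 1 [← this]
    rw [Finset.prod_multiset_count]
    rfl
  have hP : ∀ p ∈ (normalizedFactors m).toFinset, isP p ∧ p ∣ m := by
    intro p hp
    rw [Multiset.mem_toFinset] at hp
    exact ⟨prime_isP (prime_of_normalized_factor p hp), dvd_of_mem_normalizedFactors hp⟩
  have h2 : nm m = ∏ p ∈ (normalizedFactors m).toFinset, nm p ^ vv p m := by
    nth_rewrite 1 [h1]
    rw [nm_prod]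
    simp only [nm_pow]
  rw [h2, Real.log_prod (fun p hp => (pow_pos (nm_pos (hP p hp).1.2) _).ne')]
  simp only [Real.log_pow]
  rw [Finset.sum_subset (s₂ := prm K x)]
  · exact Finset.sum_congr rfl fun p _ => mul_comm _ _
  · intro p hp
    rw [mem_prm]
    exact ⟨(hP p hp).1, (nm_le_of_dvd hm.1 (hP p hp).2).trans hm.2⟩
  · intro p _ hp
    rw [Multiset.mem_toFinset] at hp
    unfold vv
    rw [Multiset.count_eq_zero.mpr hp]
    simp

def VV (p : Ideal (𝓞 K)) (x : ℝ) : ℝ := ∑ m ∈ idl K x, (vv p m : ℝ)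

lemma VV_rec {p : Ideal (𝓞 K)} (hp : isP p) (x : ℝ) :
    VV p x = (idl K (x / nm p)).card + VV p (x / nm p) := by
  unfold VV
  rw [sum_mult p hp.2 x (fun m => (vv p m : ℝ)) (fun I _ h => by simp [vv_zero h])]
  rw [Finset.card_eq_sum_ones, Nat.cast_sum, ← Finset.sum_add_distrib]
  refine Finset.sum_congr rfl fun I hI => ?_
  rw [vv_mul hp (mem_idl.mp hI).1]
  push_cast
  ring

lemma VV_bound (C δ : ℝ) (hC : 0 ≤ C) (hδ : 0 < δ) (hδ2 : δ < 1 / 2)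
    (h : ∀ x : ℝ, 0 < x → |((idl K x).card : ℝ) - kapM K * x| ≤ C * x ^ (1 - δ))
    {p : Ideal (𝓞 K)} (hp : isP p) (x : ℝ) (hx : 0 < x) :
    |VV p x - kapM K * x / (nm p - 1)| ≤
      (2 * kapM K + C / (1 - 2 ^ (-(1 - δ)))) * (x / nm p) ^ (1 - δ) := by
  have hN := hp.two_le
  have hN0 : 0 < nm p := by linarith
  have hN1 : 0 < nm p - 1 := by linarith
  have hk := kapM_pos K
  set N := nm p
  have h2lt : (2 : ℝ) ^ (-(1 - δ)) < 1 :=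
    Real.rpow_lt_one_of_one_lt_of_neg (by norm_num) (by linarith)
  have key := dyadic (fun x => |VV p x - kapM K * x / (N - 1)|) (1 - δ) N 1 (2 ^ (-(1 - δ)))
    (2 * kapM K * N ^ (-(1 - δ))) (C * N ^ (-(1 - δ))) hN zero_le_one h2lt ?_ (by positivity)
    (by positivity) ?_ ?_ x hx
  · refine key.trans (le_of_eq ?_)
    rw [Real.div_rpow hx.le hN0.le, Real.rpow_neg hN0.le]
    ring
  · rw [Real.rpow_neg (by norm_num), ← div_eq_inv_mul, one_le_div (by positivity)]
    exact Real.rpow_le_rpow (by norm_num) hN (by linarith)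
  · intro x hx hx1
    have : VV p x = 0 := by unfold VV; rw [idl_empty hx1]; simp
    simp only [this, zero_sub, abs_neg]
    rw [abs_of_nonneg (by positivity)]
    have h1 : x / N ≤ (x / N) ^ (1 - δ) := by
      apply rpow_sub_pow (by positivity) _ (by linarith)
      rw [div_le_one hN0]; linarith
    rw [Real.div_rpow hx.le hN0.le] at h1
    have h2 : kapM K * x / (N - 1) ≤ 2 * kapM K * (x / N) := by
      rw [div_le_iff₀ hN1]
      have : 2 * kapM K * (x / N) * (N - 1) = kapM K * x * ((2 * (N - 1)) / N) := by ring
      rw [this]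
      apply le_mul_of_one_le_right (by positivity)
      rw [one_le_div hN0]; linarith
    calc _ ≤ _ := h2
      _ ≤ 2 * kapM K * (x ^ (1 - δ) / N ^ (1 - δ)) := by gcongr
      _ = _ := by rw [Real.rpow_neg hN0.le]; ring
  · intro x hx1
    have hx : 0 < x := by linarith
    have h1 := h (x / N) (by positivity)
    have e : VV p x - kapM K * x / (N - 1) = (VV p (x / N) - kapM K * (x / N) / (N - 1)) +
        (((idl K (x / N)).card : ℝ) - kapM K * (x / N)) := by
      rw [VV_rec hp x]
      field_simp
      ring
    rw [e, one_mul]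
    refine (abs_add_le _ _).trans (add_le_add le_rfl (h1.trans (le_of_eq ?_)))
    rw [Real.div_rpow hx.le hN0.le, Real.rpow_neg hN0.le]
    ring

variable (K) in
lemma mertens1 : ∃ C : ℝ, 0 ≤ C ∧ ∀ x : ℝ, 1 ≤ x →
    |∑ p ∈ prm K x, Real.log (nm p) / nm p - Real.log x| ≤ C := by
  obtain ⟨C, δ, hC, hδ, hδ2, h⟩ := idl_count K
  obtain ⟨D1, hD1, h1⟩ := wsumI K (1 / 2) (by norm_num) (by norm_num)
  obtain ⟨D2, hD2, h2⟩ := wsumP K (1 - δ) (by linarith) (by linarith)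
  obtain ⟨B, hB, h3⟩ := tailP K 2 (by norm_num)
  have hk := kapM_pos K
  have h2lt : (2 : ℝ) ^ (-(1 - δ)) < 1 :=
    Real.rpow_lt_one_of_one_lt_of_neg (by norm_num) (by linarith)
  have h2p : 0 < 1 - (2 : ℝ) ^ (-(1 - δ)) := by linarith
  set M := 2 * kapM K + C / (1 - 2 ^ (-(1 - δ))) with hM
  have hM0 : 0 ≤ M := by positivity
  refine ⟨(C / δ + 2 * D1 + M * D2 + kapM K * (2 * (B * 2))) / kapM K, by positivity, ?_⟩
  intro x hx1
  have hx : 0 < x := by linarith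
  have hlx : 0 ≤ Real.log x := Real.log_nonneg hx1
  set L := ∑ m ∈ idl K x, Real.log (nm m) with hL
  -- step 1
  have s1 : |L - kapM K * x * Real.log x| ≤ (C / δ + 2 * D1) * x := by
    have e : L = (idl K x).card * Real.log x - ∑ m ∈ idl K x, Real.log (x / nm m) := by
      rw [Finset.card_eq_sum_ones, Nat.cast_sum, Finset.sum_mul, ← Finset.sum_sub_distrib]
      refine Finset.sum_congr rfl fun m hm => ?_
      rw [Real.log_div hx.ne' (nm_pos (mem_idl.mp hm).1).ne']
      push_cast
      ring
    have f1 : 0 ≤ ∑ m ∈ idl K x, Real.log (x / nm m) := by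
      apply Finset.sum_nonneg
      intro m hm
      rw [mem_idl] at hm
      apply Real.log_nonneg
      rw [one_le_div (nm_pos hm.1)]
      exact hm.2
    have f2 : ∑ m ∈ idl K x, Real.log (x / nm m) ≤ 2 * (D1 * x) := by
      calc _ ≤ ∑ m ∈ idl K x, 2 * (x / nm m) ^ (1 / 2 : ℝ) := by
            apply Finset.sum_le_sum
            intro m hm
            rw [mem_idl] at hm
            have := Real.log_le_rpow_div (x := x / nm m) (ε := 1 / 2)
              (div_nonneg hx.le (nm_pos hm.1).le) (by norm_num)
            linarith
        _ ≤ _ := by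
            rw [← Finset.mul_sum]
            linarith [h1 x hx]
    have f3 : |((idl K x).card - kapM K * x) * Real.log x| ≤ C / δ * x := by
      rw [abs_mul, abs_of_nonneg hlx]
      calc _ ≤ C * x ^ (1 - δ) * (x ^ δ / δ) := by
            apply mul_le_mul (h x hx) (Real.log_le_rpow_div hx.le hδ) hlx (by positivity)
        _ = C / δ * (x ^ (1 - δ) * x ^ δ) := by ring
        _ = C / δ * x := by
            rw [← Real.rpow_add hx]
            simp
    rw [abs_le] at f3 ⊢
    constructor <;> nlinarith [f3.1, f3.2]
  have s2 : L = ∑ p ∈ prm K x, Real.log (nm p) * VV p x := by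
    rw [hL, Finset.sum_congr rfl (fun m hm => log_nm_eq hm), Finset.sum_comm]
    refine Finset.sum_congr rfl fun p _ => ?_
    rw [VV, Finset.mul_sum]
  have s3 : |L - kapM K * x * ∑ p ∈ prm K x, Real.log (nm p) / (nm p - 1)| ≤ M * (D2 * x) := by
    rw [s2, Finset.mul_sum, ← Finset.sum_sub_distrib]
    calc _ ≤ ∑ p ∈ prm K x, |Real.log (nm p) * VV p x -
              kapM K * x * (Real.log (nm p) / (nm p - 1))| := Finset.abs_sum_le_sum_abs _ _
      _ ≤ ∑ p ∈ prm K x, M * (Real.log (nm p) * (x / nm p) ^ (1 - δ)) := by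
          apply Finset.sum_le_sum
          intro p hp
          rw [mem_prm] at hp
          have hl : 0 ≤ Real.log (nm p) := Real.log_nonneg (by linarith [hp.1.two_le])
          have e : Real.log (nm p) * VV p x - kapM K * x * (Real.log (nm p) / (nm p - 1)) =
            Real.log (nm p) * (VV p x - kapM K * x / (nm p - 1)) := by ring
          rw [e, abs_mul, abs_of_nonneg hl]
          have := mul_le_mul_of_nonneg_left (VV_bound C δ hC hδ hδ2 h hp.1 x hx) hl
          refine this.trans (le_of_eq ?_)
          rw [hM]
          ring
      _ ≤ _ := by
          rw [← Finset.mul_sum]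
          exact mul_le_mul_of_nonneg_left (h2 x hx) hM0
  have s4 : |∑ p ∈ prm K x, Real.log (nm p) / (nm p - 1) -
      ∑ p ∈ prm K x, Real.log (nm p) / nm p| ≤ 2 * (B * 2) := by
    rw [← Finset.sum_sub_distrib]
    have h4 := h3 (1 / 2) (by norm_num) (prm K x) (by
      intro p hp
      rw [mem_prm] at hp
      exact ⟨hp.1, by linarith [hp.1.two_le]⟩)
    have h5 : (1 / 2 : ℝ) ^ (1 - 2 : ℝ) = 2 := by
      rw [show (1 - 2 : ℝ) = -1 by norm_num, Real.rpow_neg_one]; norm_num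
    rw [h5] at h4
    refine (Finset.abs_sum_le_sum_abs _ _).trans ?_
    refine le_trans ?_ (mul_le_mul_of_nonneg_left h4 (by norm_num : (0:ℝ) ≤ 2))
    rw [Finset.mul_sum]
    apply Finset.sum_le_sum
    intro p hp
    rw [mem_prm] at hp
    have hN := hp.1.two_le
    have hN0 : 0 < nm p := by linarith
    have hN1 : 0 < nm p - 1 := by linarith
    have hl : 0 ≤ Real.log (nm p) := Real.log_nonneg (by linarith [hp.1.two_le])
    have e : Real.log (nm p) / (nm p - 1) - Real.log (nm p) / nm p =
        Real.log (nm p) / (nm p * (nm p - 1)) := by field_simp; ring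
    rw [e, abs_of_nonneg (by positivity)]
    have e2 : nm p ^ (-2 : ℝ) = 1 / nm p ^ 2 := by
      rw [Real.rpow_neg hN0.le, Real.rpow_two, one_div]
    rw [e2, ← mul_assoc, ← div_eq_mul_one_div, div_le_div_iff₀ (by positivity) (by positivity)]
    nlinarith [mul_nonneg hl (mul_nonneg hN0.le (show 0 ≤ nm p - 2 by linarith))]
  rw [le_div_iff₀ hk]
  set S' := ∑ p ∈ prm K x, Real.log (nm p) / (nm p - 1)
  set S := ∑ p ∈ prm K x, Real.log (nm p) / nm p
  have s5 : |kapM K * x * (S - Real.log x)| ≤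
      (C / δ + 2 * D1 + M * D2 + kapM K * (2 * (B * 2))) * x := by
    have e : kapM K * x * (S - Real.log x) = (L - kapM K * x * Real.log x) -
      (L - kapM K * x * S') - kapM K * x * (S' - S) := by ring
    have s6 : |kapM K * x * (S' - S)| ≤ kapM K * x * (2 * (B * 2)) := by
      rw [abs_mul, abs_of_pos (by positivity)]
      exact mul_le_mul_of_nonneg_left s4 (by positivity)
    rw [e]
    rw [abs_le] at *
    constructor <;> linarith [s1.1, s1.2, s3.1, s3.2, s6.1, s6.2]
  rw [abs_mul, abs_of_pos (by positivity)] at s5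
  have : |S - Real.log x| * kapM K * x ≤ (C / δ + 2 * D1 + M * D2 + kapM K * (2 * (B * 2))) * x := by
    linarith
  exact le_of_mul_le_mul_right this hx

end
end

noncomputable section
set_option linter.unusedSectionVars false

section
variable {K : Type*} [Field K] [NumberField K]

open scoped Classical in
variable (K) in
def fibP (g : Ideal (𝓞 K) → ℝ) (n : ℕ) : ℝ :=
  ∑ p ∈ (prm K n).filter (fun p => Ideal.absNorm p = n), g p

lemma sum_fibP (g : Ideal (𝓞 K) → ℝ) (t : ℝ) (ht : 0 ≤ t) :
    ∑ k ∈ Finset.Icc 0 ⌊t⌋₊, fibP K g k = ∑ p ∈ prm K t, g p := by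
  classical
  rw [← Finset.sum_fiberwise_of_maps_to (s := prm K t) (t := Finset.Icc 0 ⌊t⌋₊)
    (g := fun p => Ideal.absNorm p)]
  · refine Finset.sum_congr rfl fun k hk => ?_
    unfold fibP
    refine Finset.sum_congr ?_ fun _ _ => rfl
    rw [Finset.mem_Icc] at hk
    have hk2 : (k : ℝ) ≤ t := (Nat.le_floor_iff ht).mp hk.2
    ext p
    rw [Finset.mem_filter, Finset.mem_filter, mem_prm, mem_prm]
    constructor
    · rintro ⟨⟨h1, h2⟩, h3⟩
      exact ⟨⟨h1, h2.trans hk2⟩, h3⟩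
    · rintro ⟨⟨h1, h2⟩, h3⟩
      exact ⟨⟨h1, by unfold nm; rw [h3]⟩, h3⟩
  · intro p hp
    rw [mem_prm] at hp
    rw [Finset.mem_Icc]
    exact ⟨Nat.zero_le _, Nat.le_floor hp.2⟩

lemma sum_Ioc_eq (c : ℕ → ℝ) {a b : ℕ} (h : a ≤ b) :
    ∑ k ∈ Finset.Ioc a b, c k = ∑ k ∈ Finset.Icc 0 b, c k - ∑ k ∈ Finset.Icc 0 a, c k := by
  have : Finset.Icc 0 b = Finset.Icc 0 a ∪ Finset.Ioc a b := by
    ext k; simp only [Finset.mem_Icc, Finset.mem_union, Finset.mem_Ioc]; omega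
  rw [this, Finset.sum_union]
  · ring
  · rw [Finset.disjoint_left]
    intro k
    simp only [Finset.mem_Icc, Finset.mem_Ioc]; omega

lemma abel_bound (S : ℝ → ℝ) (C x y : ℝ) (hx : 2 ≤ x) (hxy : x ≤ y)
    (hS : ∀ t, 1 ≤ t → |S t - Real.log t| ≤ C)
    (hi : MeasureTheory.IntegrableOn (fun t => deriv (fun t => (Real.log t)⁻¹) t * S t) (Set.Icc x y)
      MeasureTheory.volume) :
    |(Real.log y)⁻¹ * S y - (Real.log x)⁻¹ * S x -
      (∫ t in Set.Ioc x y, deriv (fun t => (Real.log t)⁻¹) t * S t) -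
      (Real.log (Real.log y) - Real.log (Real.log x))| ≤ 2 * C / Real.log x := by
  have hlx : 0 < Real.log x := Real.log_pos (by linarith)
  have hly : 0 < Real.log y := Real.log_pos (by linarith)
  have hC : 0 ≤ C := (abs_nonneg _).trans (hS 1 le_rfl)
  have hder : ∀ t, x ≤ t → deriv (fun t => (Real.log t)⁻¹) t = - (t⁻¹ / Real.log t ^ 2) := by
    intro t ht
    have hlt : 0 < Real.log t := Real.log_pos (by linarith)
    have := ((Real.hasDerivAt_log (show t ≠ 0 by linarith)).inv hlt.ne').deriv
    simpa [neg_div] using this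
  -- generic integral
  have hint : ∀ D : ℝ, MeasureTheory.IntegrableOn (fun t => t⁻¹ / Real.log t ^ 2 * (Real.log t + D))
      (Set.Ioc x y) MeasureTheory.volume ∧
      ∫ t in Set.Ioc x y, t⁻¹ / Real.log t ^ 2 * (Real.log t + D) =
        (Real.log (Real.log y) - Real.log (Real.log x)) + D * ((Real.log x)⁻¹ - (Real.log y)⁻¹) := by
    intro D
    have hcont : ContinuousOn (fun t => t⁻¹ / Real.log t ^ 2 * (Real.log t + D)) (Set.uIcc x y) := by
      rw [Set.uIcc_of_le hxy]
      intro t ht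
      have h1 : t ≠ 0 := by linarith [ht.1]
      have h2 : Real.log t ^ 2 ≠ 0 := (pow_pos (Real.log_pos (by linarith [ht.1])) 2).ne'
      apply ContinuousAt.continuousWithinAt
      have := Real.continuousAt_log h1
      exact ((continuousAt_inv₀ h1).div (this.pow 2) h2).mul (this.add continuousAt_const)
    have hii := hcont.intervalIntegrable (μ := MeasureTheory.volume)
    refine ⟨(intervalIntegrable_iff_integrableOn_Ioc_of_le hxy).mp hii, ?_⟩
    rw [← intervalIntegral.integral_of_le hxy]
    rw [intervalIntegral.integral_eq_sub_of_hasDerivAt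
      (f := fun t => Real.log (Real.log t) - D * (Real.log t)⁻¹) _ hii]
    · ring
    · intro t ht
      rw [Set.uIcc_of_le hxy] at ht
      have h1 : t ≠ 0 := by linarith [ht.1]
      have h2 : Real.log t ≠ 0 := (Real.log_pos (by linarith [ht.1])).ne'
      have h3 := Real.hasDerivAt_log h1
      have h4 := (h3.log h2).sub ((h3.inv h2).const_mul D)
      have e : t⁻¹ / Real.log t ^ 2 * (Real.log t + D) =
          t⁻¹ / Real.log t - D * (-t⁻¹ / Real.log t ^ 2) := by
        field_simp
        ring
      rw [e]
      exact h4
  have hI : MeasureTheory.IntegrableOn (fun t => t⁻¹ / Real.log t ^ 2 * S t) (Set.Ioc x y)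
      MeasureTheory.volume := by
    have h1 := (hi.mono_set Set.Ioc_subset_Icc_self).neg
    refine h1.congr_fun ?_ measurableSet_Ioc
    intro t ht
    simp only [Pi.neg_apply]
    rw [hder t ht.1.le]
    ring
  have hIe : (∫ t in Set.Ioc x y, deriv (fun t => (Real.log t)⁻¹) t * S t) =
      - ∫ t in Set.Ioc x y, t⁻¹ / Real.log t ^ 2 * S t := by
    rw [← MeasureTheory.integral_neg]
    apply MeasureTheory.setIntegral_congr_fun measurableSet_Ioc
    intro t ht
    simp only
    rw [hder t ht.1.le]
    ring
  have up : ∫ t in Set.Ioc x y, t⁻¹ / Real.log t ^ 2 * S t ≤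
      ∫ t in Set.Ioc x y, t⁻¹ / Real.log t ^ 2 * (Real.log t + C) := by
    apply MeasureTheory.setIntegral_mono_on hI (hint C).1 measurableSet_Ioc
    intro t ht
    have ht1 := ht.1
    apply mul_le_mul_of_nonneg_left
    · linarith [(abs_le.mp (hS t (by linarith))).2]
    · have : 0 < t := by linarith
      positivity
  have lo : ∫ t in Set.Ioc x y, t⁻¹ / Real.log t ^ 2 * (Real.log t + (-C)) ≤
      ∫ t in Set.Ioc x y, t⁻¹ / Real.log t ^ 2 * S t := by
    apply MeasureTheory.setIntegral_mono_on (hint (-C)).1 hI measurableSet_Ioc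
    intro t ht
    have ht1 := ht.1
    apply mul_le_mul_of_nonneg_left
    · linarith [(abs_le.mp (hS t (by linarith))).1]
    · have : 0 < t := by linarith
      positivity
  rw [(hint C).2] at up
  rw [(hint (-C)).2] at lo
  rw [hIe]
  have b1 : |(Real.log y)⁻¹ * S y - 1| ≤ C * (Real.log y)⁻¹ := by
    have e : (Real.log y)⁻¹ * S y - 1 = (S y - Real.log y) * (Real.log y)⁻¹ := by field_simp
    rw [e, abs_mul, abs_of_pos (inv_pos.mpr hly)]
    exact mul_le_mul_of_nonneg_right (hS y (by linarith)) (inv_pos.mpr hly).le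
  have b2 : |(Real.log x)⁻¹ * S x - 1| ≤ C * (Real.log x)⁻¹ := by
    have e : (Real.log x)⁻¹ * S x - 1 = (S x - Real.log x) * (Real.log x)⁻¹ := by field_simp
    rw [e, abs_mul, abs_of_pos (inv_pos.mpr hlx)]
    exact mul_le_mul_of_nonneg_right (hS x (by linarith)) (inv_pos.mpr hlx).le
  rw [abs_le] at b1 b2 ⊢
  rw [div_eq_mul_inv]
  constructor <;> linarith [b1.1, b1.2, b2.1, b2.2]

lemma mertens2_aux (C : ℝ) (hC : ∀ x : ℝ, 1 ≤ x →
    |∑ p ∈ prm K x, Real.log (nm p) / nm p - Real.log x| ≤ C) (x y : ℝ) (hx : 2 ≤ x) (hxy : x ≤ y) :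
    |∑ p ∈ prm K y, 1 / nm p - ∑ p ∈ prm K x, 1 / nm p -
      (Real.log (Real.log y) - Real.log (Real.log x))| ≤ 2 * C / Real.log x := by
  have hfl : ⌊x⌋₊ ≤ ⌊y⌋₊ := Nat.floor_mono hxy
  have e1 : ∑ p ∈ prm K y, 1 / nm p - ∑ p ∈ prm K x, 1 / nm p =
      ∑ k ∈ Finset.Ioc ⌊x⌋₊ ⌊y⌋₊, (Real.log k)⁻¹ * fibP K (fun p => Real.log (nm p) / nm p) k := by
    rw [← sum_fibP _ y (by linarith), ← sum_fibP _ x (by linarith), ← sum_Ioc_eq _ hfl]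
    refine Finset.sum_congr rfl fun k hk => ?_
    unfold fibP
    rw [Finset.mul_sum]
    refine Finset.sum_congr rfl fun p hp => ?_
    rw [Finset.mem_filter, mem_prm] at hp
    have h1 : (k : ℝ) = nm p := by unfold nm; rw [hp.2]
    have h2 := hp.1.1.two_le
    have h3 : Real.log (nm p) ≠ 0 := (Real.log_pos (by linarith)).ne'
    rw [h1]
    field_simp
  have hdiff : ∀ t ∈ Set.Icc x y, DifferentiableAt ℝ (fun t => (Real.log t)⁻¹) t := by
    intro t ht
    have h1 : t ≠ 0 := by linarith [ht.1]
    have h2 : Real.log t ≠ 0 := (Real.log_pos (by linarith [ht.1])).ne'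
    exact (Real.differentiableAt_log h1).inv h2
  have hint : MeasureTheory.IntegrableOn (deriv (fun t => (Real.log t)⁻¹)) (Set.Icc x y)
      MeasureTheory.volume := by
    have hcont : ContinuousOn (fun t => - (t⁻¹ / Real.log t ^ 2)) (Set.Icc x y) := by
      intro t ht
      have h1 : t ≠ 0 := by linarith [ht.1]
      have h2 : Real.log t ^ 2 ≠ 0 := (pow_pos (Real.log_pos (by linarith [ht.1])) 2).ne'
      apply ContinuousAt.continuousWithinAt
      have := Real.continuousAt_log h1
      exact ((continuousAt_inv₀ h1).div (this.pow 2) h2).neg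
    refine hcont.integrableOn_Icc.congr_fun ?_ measurableSet_Icc
    intro t ht
    have h1 : t ≠ 0 := by linarith [ht.1]
    have h2 : Real.log t ≠ 0 := (Real.log_pos (by linarith [ht.1])).ne'
    have := ((Real.hasDerivAt_log h1).inv h2).deriv
    symm
    simpa [neg_div] using this
  rw [e1, sum_mul_eq_sub_sub_integral_mul _ (f := fun t => (Real.log t)⁻¹) (by linarith) hxy hdiff hint]
  rw [sum_fibP _ y (by linarith), sum_fibP _ x (by linarith)]
  have e2 : (∫ t in Set.Ioc x y, deriv (fun t => (Real.log t)⁻¹) t *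
        ∑ k ∈ Finset.Icc 0 ⌊t⌋₊, fibP K (fun p => Real.log (nm p) / nm p) k) =
      ∫ t in Set.Ioc x y, deriv (fun t => (Real.log t)⁻¹) t *
        ∑ p ∈ prm K t, Real.log (nm p) / nm p := by
    apply MeasureTheory.setIntegral_congr_fun measurableSet_Ioc
    intro t ht
    simp only
    rw [sum_fibP _ t (by linarith [ht.1])]
  rw [e2]
  apply abel_bound (fun t => ∑ p ∈ prm K t, Real.log (nm p) / nm p) C x y hx hxy hC
  have := integrableOn_mul_sum_Icc (fibP K (fun p => Real.log (nm p) / nm p)) (m := 0)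
    (a := x) (b := y) (by linarith) hint
  refine this.congr_fun ?_ measurableSet_Icc
  intro t ht
  simp only
  rw [sum_fibP _ t (by linarith [ht.1])]

lemma mertens2 (A : ℝ) (hA : Tendsto (fun x => ∑ p ∈ prm K x, 1 / nm p - Real.log (Real.log x))
    atTop (𝓝 A)) : ∃ C : ℝ, 0 ≤ C ∧ ∀ x : ℝ, 2 ≤ x →
    |∑ p ∈ prm K x, 1 / nm p - Real.log (Real.log x) - A| ≤ C / Real.log x := by
  obtain ⟨C, hC0, hC⟩ := mertens1 K
  refine ⟨2 * C, by positivity, fun x hx => ?_⟩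
  rw [abs_sub_comm]
  have h1 : Tendsto (fun y => |(∑ p ∈ prm K y, 1 / nm p - Real.log (Real.log y)) -
      (∑ p ∈ prm K x, 1 / nm p - Real.log (Real.log x))|) atTop
      (𝓝 |A - (∑ p ∈ prm K x, 1 / nm p - Real.log (Real.log x))|) :=
    (hA.sub_const _).abs
  apply le_of_tendsto h1
  filter_upwards [eventually_ge_atTop x] with y hy
  have := mertens2_aux C hC x y hx hy
  refine le_of_eq_of_le ?_ this
  congr 1
  ring

end
end

noncomputable section
set_option linter.unusedSectionVars false

section
variable {K : Type*} [Field K] [NumberField K]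

lemma isP_eq_of_dvd {p q : Ideal (𝓞 K)} (hp : isP p) (hq : isP q) (h : p ∣ q) : p = q :=
  associated_iff_eq.mp ((hp.prime.dvd_prime_iff_associated hq.prime).mp h)

lemma relP {p q : Ideal (𝓞 K)} (hp : isP p) (hq : isP q) (h : p ≠ q) (m n : ℕ) :
    IsRelPrime (p ^ m) (q ^ n) := by
  have : IsRelPrime p q := by
    rw [hp.prime.irreducible.isRelPrime_iff_not_dvd]
    exact fun h' => h (isP_eq_of_dvd hp hq h')
  exact this.pow

lemma pow_dvd_pow_mul_iff {p q : Ideal (𝓞 K)} (hp : isP p) (hq : isP q) (h : p ≠ q) (m n : ℕ)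
    (I : Ideal (𝓞 K)) : p ^ m ∣ q ^ n * I ↔ p ^ m ∣ I :=
  ⟨fun h' => (relP hp hq h m n).dvd_of_dvd_mul_left h', fun h' => h'.mul_left _⟩

open scoped Classical in
def indP (h : ℕ) (P : Finset (Ideal (𝓞 K))) (I : Ideal (𝓞 K)) : ℝ :=
  if ∀ p ∈ P, ¬ p ^ h ∣ I then 1 else 0

lemma indP_mul (h n : ℕ) (P : Finset (Ideal (𝓞 K))) (hP : ∀ p ∈ P, isP p) (q : Ideal (𝓞 K))
    (hq : isP q) (hqP : q ∉ P) (I : Ideal (𝓞 K)) : indP h P (q ^ n * I) = indP h P I := by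
  classical
  unfold indP
  congr 1
  apply propext
  refine forall₂_congr fun p hp => ?_
  rw [pow_dvd_pow_mul_iff (hP p hp) hq (by rintro rfl; exact hqP hp)]

open scoped Classical in
lemma indP_insert (h : ℕ) (P : Finset (Ideal (𝓞 K))) (q I : Ideal (𝓞 K)) :
    indP h (insert q P) I = indP h P I - (if q ^ h ∣ I then indP h P I else 0) := by
  unfold indP
  by_cases h1 : q ^ h ∣ I <;> by_cases h2 : ∀ p ∈ P, ¬ p ^ h ∣ I
  · simp [h1, h2]
  · simp [h1, h2]
  · have : ∀ p ∈ insert q P, ¬ p ^ h ∣ I := by simpa using ⟨h1, h2⟩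
    rw [if_pos this, if_pos h2, if_neg h1, sub_zero]
  · have : ¬ ∀ p ∈ insert q P, ¬ p ^ h ∣ I := by
      intro h3
      exact h2 fun p hp => h3 p (Finset.mem_insert_of_mem hp)
    rw [if_neg this, if_neg h2, if_neg h1, sub_zero]

def QP (h : ℕ) (P : Finset (Ideal (𝓞 K))) (x : ℝ) : ℝ := ∑ I ∈ idl K x, indP h P I

open scoped Classical in
lemma QP_insert (h : ℕ) (P : Finset (Ideal (𝓞 K))) (hP : ∀ p ∈ P, isP p) (q : Ideal (𝓞 K))
    (hq : isP q) (hqP : q ∉ P) (x : ℝ) :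
    QP h (insert q P) x = QP h P x - QP h P (x / nm q ^ h) := by
  unfold QP
  simp only [indP_insert, Finset.sum_sub_distrib]
  congr 1
  rw [sum_mult (q ^ h) (pow_ne_zero h hq.2) x _ (fun I _ hI => if_neg hI), nm_pow]
  refine Finset.sum_congr rfl fun I _ => ?_
  rw [if_pos (dvd_mul_right _ _), indP_mul h h P hP q hq hqP]

lemma QP_bound (h : ℕ) (C δ : ℝ) (hC : 0 ≤ C) 
    (hc : ∀ x : ℝ, 0 < x → |((idl K x).card : ℝ) - kapM K * x| ≤ C * x ^ (1 - δ))
    (P : Finset (Ideal (𝓞 K))) (hP : ∀ p ∈ P, isP p) : ∀ x : ℝ, 0 < x →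
    |QP h P x - kapM K * x * ∏ p ∈ P, (1 - (nm p ^ h)⁻¹)| ≤
      C * x ^ (1 - δ) * ∏ p ∈ P, (1 + nm p ^ (-(h * (1 - δ)))) := by
  classical
  induction P using Finset.induction_on with
  | empty =>
    intro x hx
    simpa [QP, indP] using hc x hx
  | insert q P hqP ih =>
    have hP' : ∀ p ∈ P, isP p := fun p hp => hP p (Finset.mem_insert_of_mem hp)
    have hq := hP q (Finset.mem_insert_self _ _)
    intro x hx
    have hN : 0 < nm q := by linarith [hq.two_le]
    rw [QP_insert h P hP' q hq hqP, Finset.prod_insert hqP, Finset.prod_insert hqP]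
    have i1 := ih hP' x hx
    have i2 := ih hP' (x / nm q ^ h) (by positivity)
    set A := ∏ p ∈ P, (1 - (nm p ^ h)⁻¹)
    set B := ∏ p ∈ P, (1 + nm p ^ (-(h * (1 - δ))))
    have e1 : (x / nm q ^ h) ^ (1 - δ) = x ^ (1 - δ) * nm q ^ (-(h * (1 - δ))) := by
      rw [Real.div_rpow hx.le (by positivity), ← Real.rpow_natCast, ← Real.rpow_mul hN.le,
        Real.rpow_neg hN.le, div_eq_mul_inv]
    rw [e1] at i2
    have e2 : QP h P x - QP h P (x / nm q ^ h) - kapM K * x * ((1 - (nm q ^ h)⁻¹) * A) =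
      (QP h P x - kapM K * x * A) - (QP h P (x / nm q ^ h) - kapM K * (x / nm q ^ h) * A) := by
      ring
    rw [e2]
    refine (abs_sub _ _).trans ((add_le_add i1 i2).trans (le_of_eq ?_))
    ring

/-- zeta with primes of P removed -/
def zf (h : ℕ) (P : Finset (Ideal (𝓞 K))) (I : Ideal (𝓞 K)) : ℝ := indP 1 P I * (nm I ^ h)⁻¹

open scoped Classical in
lemma zf_hasSum (h : ℕ) (Z : ℝ) (hZ : HasSum (fun I : Ideal (𝓞 K) => (nm I ^ h)⁻¹) Z)
    (P : Finset (Ideal (𝓞 K))) (hP : ∀ p ∈ P, isP p) :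
    HasSum (zf h P) (Z * ∏ p ∈ P, (1 - (nm p ^ h)⁻¹)) := by
  induction P using Finset.induction_on with
  | empty =>
    have e : zf h (∅ : Finset (Ideal (𝓞 K))) = fun I : Ideal (𝓞 K) => (nm I ^ h)⁻¹ := by
      funext I
      simp [zf, indP]
    rw [e, Finset.prod_empty, mul_one]
    exact hZ
  | insert q P hqP ih =>
    have hP' : ∀ p ∈ P, isP p := fun p hp => hP p (Finset.mem_insert_of_mem hp)
    have hq := hP q (Finset.mem_insert_self _ _)
    have i1 := ih hP'
    set A := Z * ∏ p ∈ P, (1 - (nm p ^ h)⁻¹) with hA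
    have i2 : HasSum (fun I => if q ∣ I then zf h P I else 0) ((nm q ^ h)⁻¹ * A) := by
      have hinj : Function.Injective (fun I : Ideal (𝓞 K) => q * I) :=
        fun I J hIJ => mul_left_cancel₀ (show q ≠ 0 from hq.2) hIJ
      rw [← hinj.hasSum_iff]
      · have e : ((fun I => if q ∣ I then zf h P I else 0) ∘ fun I : Ideal (𝓞 K) => q * I) =
            fun I => (nm q ^ h)⁻¹ * zf h P I := by
          funext I
          simp only [Function.comp]
          rw [if_pos (dvd_mul_right _ _)]
          unfold zf
          have := indP_mul 1 1 P hP' q hq hqP I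
          rw [pow_one] at this
          rw [this, nm_mul, mul_pow, mul_inv]
          ring
        rw [e]
        exact i1.mul_left _
      · intro I hI
        apply if_neg
        rintro ⟨L, rfl⟩
        exact hI ⟨L, rfl⟩
    have i3 := i1.sub i2
    have e : zf h (insert q P) = fun I => zf h P I - (if q ∣ I then zf h P I else 0) := by
      funext I
      unfold zf
      rw [indP_insert, pow_one]
      split_ifs <;> ring
    rw [e, Finset.prod_insert hqP]
    have e2 : Z * ((1 - (nm q ^ h)⁻¹) * ∏ p ∈ P, (1 - (nm p ^ h)⁻¹)) = A - (nm q ^ h)⁻¹ * A := by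
      rw [hA]; ring
    rw [e2]
    exact i3

lemma indP_nonneg (h : ℕ) (P : Finset (Ideal (𝓞 K))) (I : Ideal (𝓞 K)) : 0 ≤ indP h P I := by
  classical
  unfold indP; split_ifs <;> norm_num

lemma indP_le_one (h : ℕ) (P : Finset (Ideal (𝓞 K))) (I : Ideal (𝓞 K)) : indP h P I ≤ 1 := by
  classical
  unfold indP; split_ifs <;> norm_num

lemma nm_nonneg (I : Ideal (𝓞 K)) : 0 ≤ nm I := by unfold nm; positivity

lemma nm_bot : nm (⊥ : Ideal (𝓞 K)) = 0 := by simp [nm]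

lemma rpow_nat {N : ℝ} (hN : 0 ≤ N) (h : ℕ) : N ^ (-(h : ℝ)) = (N ^ h)⁻¹ := by
  rw [Real.rpow_neg hN, Real.rpow_natCast]

variable (K) in
lemma zeta_summable (h : ℕ) (hh : 2 ≤ h) : Summable (fun I : Ideal (𝓞 K) => (nm I ^ h)⁻¹) := by
  classical
  obtain ⟨B, hB, hb⟩ := tailI K h (by exact_mod_cast (by omega : 1 < h))
  apply summable_of_sum_le (c := B * (1 / 2 : ℝ) ^ (1 - (h : ℝ)))
  · intro I
    have := nm_nonneg I
    positivity
  · intro T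
    have h1 := hb (1 / 2) (by norm_num) (T.filter (fun I => I ≠ ⊥)) (by
      intro I hI
      rw [Finset.mem_filter] at hI
      exact ⟨hI.2, by linarith [one_le_nm hI.2]⟩)
    refine le_of_eq_of_le ?_ h1
    rw [Finset.sum_filter]
    refine Finset.sum_congr rfl fun I _ => ?_
    rw [rpow_nat (nm_nonneg I)]
    split_ifs with h2
    · rfl
    · push Not at h2
      rw [h2, nm_bot, zero_pow (by omega), inv_zero]

variable (K) in
def zt (h : ℕ) : ℝ := ∑' I : Ideal (𝓞 K), (nm I ^ h)⁻¹

variable (K) in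
lemma euler (h : ℕ) (hh : 2 ≤ h) : ∃ B : ℝ, 0 ≤ B ∧ ∀ x : ℝ, 0 < x →
    1 ≤ zt K h * ∏ p ∈ prm K x, (1 - (nm p ^ h)⁻¹) ∧
    zt K h * ∏ p ∈ prm K x, (1 - (nm p ^ h)⁻¹) ≤ 1 + B * x ^ (1 - (h : ℝ)) := by
  classical
  obtain ⟨B, hB, hb⟩ := tailI K h (by exact_mod_cast (by omega : 1 < h))
  refine ⟨B, hB, fun x hx => ?_⟩
  have hs := zf_hasSum h (zt K h) (zeta_summable K h hh).hasSum (prm K x)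
    (fun p hp => (mem_prm.mp hp).1)
  have hnn : ∀ I : Ideal (𝓞 K), 0 ≤ zf h (prm K x) I := fun I => by
    have := nm_nonneg I
    have := indP_nonneg 1 (prm K x) I
    unfold zf
    positivity
  have htop : zf h (prm K x) ⊤ = 1 := by
    unfold zf
    rw [nm_top]
    have : ∀ p ∈ prm K x, ¬ p ^ 1 ∣ (⊤ : Ideal (𝓞 K)) := by
      intro p hp h1
      rw [pow_one, Ideal.dvd_iff_le, top_le_iff] at h1
      exact (mem_prm.mp hp).1.1.ne_top h1
    unfold indP
    rw [if_pos this]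
    simp
  constructor
  · exact htop.ge.trans (le_hasSum hs ⊤ (fun I _ => hnn I))
  · apply hasSum_le_of_sum_le hs
    intro T
    calc ∑ I ∈ T, zf h (prm K x) I ≤ ∑ I ∈ T, ((if I = ⊤ then 1 else 0) +
          (if I ≠ ⊥ ∧ x < nm I then (nm I) ^ (-(h : ℝ)) else 0)) := by
          apply Finset.sum_le_sum
          intro I _
          have hr : (0:ℝ) ≤ (if I ≠ ⊥ ∧ x < nm I then (nm I) ^ (-(h : ℝ)) else 0) := by
            have := nm_nonneg I
            split_ifs <;> positivity
          by_cases h1 : I = ⊤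
          · subst h1
            rw [htop, if_pos rfl]
            linarith
          rw [if_neg h1, zero_add]
          by_cases h2 : I = ⊥
          · subst h2
            refine le_trans (le_of_eq ?_) hr
            unfold zf
            rw [nm_bot, zero_pow (by omega), inv_zero, mul_zero]
          by_cases h3 : x < nm I
          · rw [if_pos ⟨h2, h3⟩, rpow_nat (nm_nonneg I)]
            unfold zf
            have := nm_nonneg I
            exact mul_le_of_le_one_left (by positivity) (indP_le_one _ _ _)
          · refine le_trans (le_of_eq ?_) hr
            obtain ⟨p, hp, hpI⟩ := exists_isP_dvd h1
            have hp' : isP p := ⟨hp, by rintro rfl; exact h2 (zero_dvd_iff.mp hpI)⟩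
            have hm : p ∈ prm K x :=
              mem_prm.mpr ⟨hp', (nm_le_of_dvd h2 hpI).trans (not_lt.mp h3)⟩
            unfold zf indP
            rw [if_neg, zero_mul]
            intro h4
            exact h4 p hm (by rwa [pow_one])
      _ ≤ 1 + B * x ^ (1 - (h : ℝ)) := by
          rw [Finset.sum_add_distrib]
          apply add_le_add
          · rw [Finset.sum_ite_eq' T ⊤ (fun _ => (1 : ℝ))]
            split_ifs <;> norm_num
          · rw [← Finset.sum_filter]
            apply hb x hx
            intro I hI
            exact (Finset.mem_filter.mp hI).2

variable (K) in
lemma zt_ge_one (h : ℕ) (hh : 2 ≤ h) : 1 ≤ zt K h := by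
  have := le_hasSum (zeta_summable K h hh).hasSum ⊤ (fun I _ => by
    have := nm_nonneg I
    positivity)
  rw [nm_top, one_pow, inv_one] at this
  exact this

open scoped Classical in
def indF (h : ℕ) (I : Ideal (𝓞 K)) : ℝ := if ∀ p, isP p → ¬ p ^ h ∣ I then 1 else 0

variable (K) in
def Qf (h : ℕ) (x : ℝ) : ℝ := ∑ I ∈ idl K x, indF h I

lemma Qf_eq (h : ℕ) (hh : 2 ≤ h) (x : ℝ) : Qf K h x = QP h (prm K x) x := by
  classical
  unfold Qf QP
  refine Finset.sum_congr rfl fun I hI => ?_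
  rw [mem_idl] at hI
  unfold indF indP
  congr 1
  apply propext
  constructor
  · intro h1 p hp
    exact h1 p (mem_prm.mp hp).1
  · intro h1 p hp h2
    refine h1 p (mem_prm.mpr ⟨hp, ?_⟩) h2
    exact (nm_le_of_dvd hI.1 ((dvd_pow_self p (by omega)).trans h2)).trans hI.2

variable (K) in
lemma Qf_bound (h : ℕ) (hh : 2 ≤ h) (C δ : ℝ) (hC : 0 ≤ C) (hδ : 0 < δ) (hδ2 : δ < 1 / 2)
    (hc : ∀ x : ℝ, 0 < x → |((idl K x).card : ℝ) - kapM K * x| ≤ C * x ^ (1 - δ)) :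
    ∃ D : ℝ, 0 ≤ D ∧ ∀ x : ℝ, 0 < x → |Qf K h x - kapM K / zt K h * x| ≤ D * x ^ (1 - δ) := by
  have hhR : (2 : ℝ) ≤ h := by exact_mod_cast hh
  have hs1 : 1 < h * (1 - δ) := by nlinarith
  obtain ⟨B1, hB1, hb1⟩ := tailI K _ hs1
  obtain ⟨B2, hB2, hb2⟩ := euler K h hh
  have hz := zt_ge_one K h hh
  have hk := kapM_pos K
  have hz0 : 0 < zt K h := by linarith
  set E := Real.exp (B1 * (1 / 2) ^ (1 - h * (1 - δ))) with hE
  have hE0 : 0 < E := Real.exp_pos _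
  refine ⟨C * E + kapM K * B2 + kapM K / zt K h, by positivity, fun x hx => ?_⟩
  have hxa : 0 < x ^ (1 - δ) := by positivity
  rcases lt_or_ge x 1 with hx1 | hx1
  · have : Qf K h x = 0 := by unfold Qf; rw [idl_empty hx1]; simp
    rw [this, zero_sub, abs_neg, abs_of_nonneg (by positivity)]
    have h1 := rpow_sub_pow hx hx1.le (show 1 - δ ≤ 1 by linarith)
    have h2 : kapM K / zt K h * x ≤ kapM K / zt K h * x ^ (1 - δ) := by gcongr
    have h3 : 0 ≤ (C * E + kapM K * B2) * x ^ (1 - δ) := by positivity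
    linarith
  · have q1 := QP_bound h C δ hC hc (prm K x) (fun p hp => (mem_prm.mp hp).1) x hx
    rw [← Qf_eq h hh] at q1
    have q2 : ∏ p ∈ prm K x, (1 + nm p ^ (-(h * (1 - δ)))) ≤ E := by
      calc _ ≤ ∏ p ∈ prm K x, Real.exp (nm p ^ (-(h * (1 - δ)))) := by
            apply Finset.prod_le_prod
            · intro p _
              have := nm_nonneg p
              positivity
            · intro p _
              rw [add_comm]
              exact Real.add_one_le_exp _
        _ = Real.exp (∑ p ∈ prm K x, nm p ^ (-(h * (1 - δ)))) := (Real.exp_sum _ _).symm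
        _ ≤ E := by
            rw [hE, Real.exp_le_exp]
            apply hb1 (1 / 2) (by norm_num)
            intro p hp
            rw [mem_prm] at hp
            exact ⟨hp.1.2, by linarith [hp.1.two_le]⟩
    obtain ⟨e1, e2⟩ := hb2 x hx
    set A := ∏ p ∈ prm K x, (1 - (nm p ^ h)⁻¹)
    have q3 : |kapM K * x * A - kapM K / zt K h * x| ≤ kapM K * B2 * x ^ (1 - δ) := by
      have e : kapM K * x * A - kapM K / zt K h * x = kapM K * x * ((zt K h * A - 1) / zt K h) := by
        field_simp
      have a1 : 0 ≤ (zt K h * A - 1) / zt K h := div_nonneg (by linarith) hz0.le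
      have a2 : (zt K h * A - 1) / zt K h ≤ B2 * x ^ (1 - (h : ℝ)) :=
        (div_le_self (by linarith) hz).trans (by linarith)
      rw [e, abs_of_nonneg (by positivity)]
      calc _ ≤ kapM K * x * (B2 * x ^ (1 - (h : ℝ))) := by gcongr
        _ = kapM K * B2 * (x ^ (1 : ℝ) * x ^ (1 - (h : ℝ))) := by rw [Real.rpow_one]; ring
        _ ≤ _ := by
            rw [← Real.rpow_add hx]
            apply mul_le_mul_of_nonneg_left _ (by positivity)
            exact Real.rpow_le_rpow_of_exponent_le hx1 (by linarith)
    have q4 : |Qf K h x - kapM K * x * A| ≤ C * x ^ (1 - δ) * E := by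
      refine q1.trans ?_
      gcongr
    have := abs_add_le (Qf K h x - kapM K * x * A) (kapM K * x * A - kapM K / zt K h * x)
    rw [sub_add_sub_cancel] at this
    have h3 : 0 ≤ kapM K / zt K h * x ^ (1 - δ) := by positivity
    linarith

end
end

noncomputable section
set_option linter.unusedSectionVars false

section
variable {K : Type*} [Field K] [NumberField K]

open scoped Classical in
def indG (h : ℕ) (p I : Ideal (𝓞 K)) : ℝ :=
  if ∀ q, isP q → q ≠ p → ¬ q ^ h ∣ I then 1 else 0

lemma indG_mul (h n : ℕ) {p : Ideal (𝓞 K)} (hp : isP p) (I : Ideal (𝓞 K)) :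
    indG h p (p ^ n * I) = indG h p I := by
  classical
  unfold indG
  congr 1
  apply propext
  refine forall_congr' fun q => forall_congr' fun hq => forall_congr' fun hqp => ?_
  rw [pow_dvd_pow_mul_iff hq hp hqp]

open scoped Classical in
lemma indF_eq (h : ℕ) {p : Ideal (𝓞 K)} (hp : isP p) (I : Ideal (𝓞 K)) :
    indF h I = indG h p I - (if p ^ h ∣ I then indG h p I else 0) := by
  unfold indF indG
  by_cases h1 : p ^ h ∣ I
  · have : ¬ ∀ p, isP p → ¬ p ^ h ∣ I := fun h2 => h2 p hp h1
    rw [if_neg this, if_pos h1, sub_self]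
  · rw [if_neg h1, sub_zero]
    congr 1
    apply propext
    constructor
    · intro h2 q hq _
      exact h2 q hq
    · intro h2 q hq
      by_cases e : q = p
      · rw [e]; exact h1
      · exact h2 q hq e

def Gf (h : ℕ) (p : Ideal (𝓞 K)) (x : ℝ) : ℝ := ∑ I ∈ idl K x, indG h p I

open scoped Classical in
lemma Gf_sub (h n : ℕ) {p : Ideal (𝓞 K)} (hp : isP p) (x : ℝ) :
    ∑ I ∈ idl K x, (if p ^ n ∣ I then indG h p I else 0) = Gf h p (x / nm p ^ n) := by
  rw [sum_mult (p ^ n) (pow_ne_zero n hp.2) x _ (fun I _ hI => if_neg hI), nm_pow]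
  refine Finset.sum_congr rfl fun I _ => ?_
  rw [if_pos (dvd_mul_right _ _), indG_mul h n hp]

lemma Gf_rec (h : ℕ) {p : Ideal (𝓞 K)} (hp : isP p) (x : ℝ) :
    Gf h p x = Qf K h x + Gf h p (x / nm p ^ h) := by
  classical
  unfold Qf
  rw [← Gf_sub h h hp, ← Finset.sum_add_distrib]
  refine Finset.sum_congr rfl fun I _ => ?_
  rw [indF_eq h hp]
  ring

open scoped Classical in
def DD (h : ℕ) (p : Ideal (𝓞 K)) (x : ℝ) : ℝ := ∑ I ∈ idl K x, if p ∣ I then indF h I else 0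

lemma DD_eq (h : ℕ) (hh : 2 ≤ h) {p : Ideal (𝓞 K)} (hp : isP p) (x : ℝ) :
    DD h p x = Gf h p (x / nm p) - Gf h p (x / nm p ^ h) := by
  classical
  obtain ⟨k, rfl⟩ : ∃ k, h = k + 1 := ⟨h - 1, by omega⟩
  have hN : 0 < nm p := nm_pos hp.2
  unfold DD
  rw [sum_mult p hp.2 x _ (fun I _ hI => if_neg hI)]
  have e : x / nm p ^ (k + 1) = x / nm p / nm p ^ k := by
    rw [pow_succ']; field_simp
  rw [e, ← Gf_sub (k + 1) k hp, Gf, ← Finset.sum_sub_distrib]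
  refine Finset.sum_congr rfl fun I _ => ?_
  rw [if_pos (dvd_mul_right _ _), indF_eq (k + 1) hp]
  have e1 := indG_mul (k + 1) 1 hp I
  rw [pow_one] at e1
  have e2 : p ^ (k + 1) ∣ p * I ↔ p ^ k ∣ I := by
    rw [pow_succ']
    exact mul_dvd_mul_iff_left (show p ≠ 0 from hp.2)
  rw [e1]
  simp only [e2]

lemma Gf_bound (h : ℕ) (hh : 2 ≤ h) (c D δ : ℝ) (hc : 0 ≤ c) (hD : 0 ≤ D) (hδ : 0 < δ)
    (hδ2 : δ < 1 / 2)
    (hq : ∀ x : ℝ, 0 < x → |Qf K h x - c * x| ≤ D * x ^ (1 - δ))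
    {p : Ideal (𝓞 K)} (hp : isP p) (x : ℝ) (hx : 0 < x) :
    |Gf h p x - c * x * (nm p ^ h / (nm p ^ h - 1))| ≤
      (2 * c + D / (1 - 2 ^ (-(1 - δ)))) * x ^ (1 - δ) := by
  have hN := hp.two_le
  set b := nm p ^ h with hb
  have hb2 : 2 ≤ b := by
    calc (2:ℝ) ≤ nm p := hN
      _ ≤ nm p ^ h := le_self_pow₀ (by linarith) (by omega)
  have hb1 : 0 < b - 1 := by linarith
  have h2lt : (2 : ℝ) ^ (-(1 - δ)) < 1 :=
    Real.rpow_lt_one_of_one_lt_of_neg (by norm_num) (by linarith)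
  refine dyadic (fun x => |Gf h p x - c * x * (b / (b - 1))|) (1 - δ) b 1 (2 ^ (-(1 - δ)))
    (2 * c) D hb2 zero_le_one h2lt ?_ (by positivity) hD ?_ ?_ x hx
  · rw [Real.rpow_neg (by norm_num), ← div_eq_inv_mul, one_le_div (by positivity)]
    exact Real.rpow_le_rpow (by norm_num) hb2 (by linarith)
  · intro x hx hx1
    have : Gf h p x = 0 := by unfold Gf; rw [idl_empty hx1]; simp
    simp only [this, zero_sub, abs_neg]
    rw [abs_of_nonneg (by positivity)]
    have h1 := rpow_sub_pow hx hx1.le (show 1 - δ ≤ 1 by linarith)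
    have h2 : b / (b - 1) ≤ 2 := by rw [div_le_iff₀ hb1]; linarith
    calc c * x * (b / (b - 1)) ≤ c * x ^ (1 - δ) * 2 := by gcongr
      _ = _ := by ring
  · intro x hx1
    have hx : 0 < x := by linarith
    have e : Gf h p x - c * x * (b / (b - 1)) = (Gf h p (x / b) - c * (x / b) * (b / (b - 1))) +
        (Qf K h x - c * x) := by
      rw [Gf_rec h hp x, ← hb]
      field_simp
      ring
    rw [e, one_mul]
    exact (abs_add_le _ _).trans (add_le_add le_rfl (hq x hx))

lemma DD_bound (h : ℕ) (hh : 2 ≤ h) (c D δ : ℝ) (hc : 0 ≤ c) (hD : 0 ≤ D) (hδ : 0 < δ)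
    (hδ2 : δ < 1 / 2)
    (hq : ∀ x : ℝ, 0 < x → |Qf K h x - c * x| ≤ D * x ^ (1 - δ))
    {p : Ideal (𝓞 K)} (hp : isP p) (x : ℝ) (hx : 0 < x) :
    |DD h p x - c * x * (1 / nm p - (nm p - 1) / (nm p * (nm p ^ h - 1)))| ≤
      2 * (2 * c + D / (1 - 2 ^ (-(1 - δ)))) * (x / nm p) ^ (1 - δ) := by
  have hN := hp.two_le
  have hN0 : 0 < nm p := by linarith
  have hNb : nm p ≤ nm p ^ h := le_self_pow₀ (by linarith) (by omega)
  have hb1 : 0 < nm p ^ h - 1 := by linarith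
  have h2lt : (2 : ℝ) ^ (-(1 - δ)) < 1 :=
    Real.rpow_lt_one_of_one_lt_of_neg (by norm_num) (by linarith)
  have h2p : 0 < 1 - (2 : ℝ) ^ (-(1 - δ)) := by linarith
  have g1 := Gf_bound h hh c D δ hc hD hδ hδ2 hq hp (x / nm p) (by positivity)
  have g2 := Gf_bound h hh c D δ hc hD hδ hδ2 hq hp (x / nm p ^ h) (by positivity)
  set M := 2 * c + D / (1 - 2 ^ (-(1 - δ)))
  have hM : 0 ≤ M := by positivity
  have g3 : (x / nm p ^ h) ^ (1 - δ) ≤ (x / nm p) ^ (1 - δ) := by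
    apply Real.rpow_le_rpow (by positivity) _ (by linarith)
    gcongr
  have g4 : M * (x / nm p ^ h) ^ (1 - δ) ≤ M * (x / nm p) ^ (1 - δ) := by gcongr
  have e : DD h p x - c * x * (1 / nm p - (nm p - 1) / (nm p * (nm p ^ h - 1))) =
    (Gf h p (x / nm p) - c * (x / nm p) * (nm p ^ h / (nm p ^ h - 1))) -
    (Gf h p (x / nm p ^ h) - c * (x / nm p ^ h) * (nm p ^ h / (nm p ^ h - 1))) := by
    rw [DD_eq h hh hp]
    set b := nm p ^ h
    have hb0 : 0 < b := by linarith
    field_simp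
    ring
  rw [e]
  refine (abs_sub _ _).trans ?_
  linarith

variable (K) in
lemma prime_err (δ : ℝ) (hδ : 0 < δ) (hδ2 : δ < 1 / 2) : ∃ C : ℝ, 0 ≤ C ∧ ∀ x : ℝ, 2 ≤ x →
    ∑ p ∈ prm K x, (x / nm p) ^ (1 - δ) ≤ C * (x / Real.log x) := by
  obtain ⟨D, hD, h⟩ := wsumP K (1 - δ / 2) (by linarith) (by linarith)
  have hl2 : 0 < Real.log 2 := Real.log_pos (by norm_num)
  set C0 := (1 / (δ / 2)) / Real.log 2 + 1 with hC0
  have hC00 : 0 ≤ C0 := by positivity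
  refine ⟨C0 * D, by positivity, fun x hx2 => ?_⟩
  have hx : 0 < x := by linarith
  have hlx : 0 < Real.log x := Real.log_pos (by linarith)
  rw [← mul_div_assoc, le_div_iff₀ hlx, Finset.sum_mul, mul_assoc]
  refine le_trans ?_ (mul_le_mul_of_nonneg_left (h x hx) hC00)
  rw [Finset.mul_sum]
  apply Finset.sum_le_sum
  intro p hp
  rw [mem_prm] at hp
  have hN := hp.1.two_le
  have hN0 : 0 < nm p := by linarith
  have hlN : Real.log 2 ≤ Real.log (nm p) := Real.log_le_log (by norm_num) hN
  have hu : 1 ≤ x / nm p := by rw [one_le_div hN0]; exact hp.2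
  set u := x / nm p with hu'
  have hu0 : 0 < u := by linarith
  have hue : 1 ≤ u ^ (δ / 2) := Real.one_le_rpow hu (by linarith)
  have e1 : Real.log x = Real.log u + Real.log (nm p) := by
    rw [hu', Real.log_div hx.ne' hN0.ne']; ring
  have e2 : Real.log u ≤ u ^ (δ / 2) / (δ / 2) := Real.log_le_rpow_div hu0.le (by linarith)
  have e3 : u ^ (δ / 2) / (δ / 2) ≤ (1 / (δ / 2)) / Real.log 2 * (Real.log (nm p) * u ^ (δ / 2)) := by
    have : (1 / (δ / 2)) / Real.log 2 * (Real.log (nm p) * u ^ (δ / 2)) =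
      (u ^ (δ / 2) / (δ / 2)) * (Real.log (nm p) / Real.log 2) := by ring
    rw [this]
    apply le_mul_of_one_le_right (by positivity)
    rwa [one_le_div hl2]
  have e4 : Real.log (nm p) ≤ Real.log (nm p) * u ^ (δ / 2) :=
    le_mul_of_one_le_right (by linarith) hue
  have e5 : Real.log x ≤ C0 * (Real.log (nm p) * u ^ (δ / 2)) := by
    rw [hC0, add_mul]; linarith
  calc u ^ (1 - δ) * Real.log x ≤ u ^ (1 - δ) * (C0 * (Real.log (nm p) * u ^ (δ / 2))) := by gcongr
    _ = C0 * (Real.log (nm p) * (u ^ (1 - δ) * u ^ (δ / 2))) := by ring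
    _ = C0 * (Real.log (nm p) * u ^ (1 - δ / 2)) := by
        rw [← Real.rpow_add hu0]
        congr 3
        ring

open scoped Classical in
def tau (h : ℕ) (p : Ideal (𝓞 K)) : ℝ :=
  if isP p then (nm p - 1) / (nm p * (nm p ^ h - 1)) else 0

lemma tau_nonneg (h : ℕ) (hh : 2 ≤ h) (p : Ideal (𝓞 K)) : 0 ≤ tau h p := by
  unfold tau
  split_ifs with hp
  · have hN := hp.two_le
    have hNb : nm p ≤ nm p ^ h := le_self_pow₀ (by linarith) (by omega)
    apply div_nonneg (by linarith)
    apply mul_nonneg <;> linarith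
  · exact le_rfl

lemma tau_le (h : ℕ) (hh : 2 ≤ h) {p : Ideal (𝓞 K)} (hp : isP p) :
    tau h p ≤ 2 * nm p ^ (-(h : ℝ)) := by
  unfold tau
  rw [if_pos hp, rpow_nat (nm_nonneg p)]
  have hN := hp.two_le
  have hN0 : 0 < nm p := by linarith
  have hNb : nm p ≤ nm p ^ h := le_self_pow₀ (by linarith) (by omega)
  set b := nm p ^ h
  rw [← div_eq_mul_inv, div_le_div_iff₀ (by apply mul_pos <;> linarith) (by linarith)]
  nlinarith [mul_nonneg hN0.le (show 0 ≤ b - 2 by linarith)]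

variable (K) in
lemma tau_sum (h : ℕ) (hh : 2 ≤ h) : ∃ B : ℝ, 0 ≤ B ∧ ∀ x : ℝ, 2 ≤ x →
    |∑' p : Ideal (𝓞 K), tau h p - ∑ p ∈ prm K x, tau h p| ≤ B / Real.log x := by
  classical
  have hhR : (2 : ℝ) ≤ h := by exact_mod_cast hh
  obtain ⟨B, hB, hb⟩ := tailI K h (by linarith)
  have key : ∀ x : ℝ, 0 < x → ∀ T : Finset (Ideal (𝓞 K)), ∑ p ∈ T, tau h p ≤
      ∑ p ∈ prm K x, tau h p + 2 * (B * x ^ (1 - (h : ℝ))) := by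
    intro x hx T
    calc ∑ p ∈ T, tau h p ≤ ∑ p ∈ T ∪ prm K x, tau h p :=
          Finset.sum_le_sum_of_subset_of_nonneg Finset.subset_union_left
            (fun p _ _ => tau_nonneg h hh p)
      _ = ∑ p ∈ T \ prm K x, tau h p + ∑ p ∈ prm K x, tau h p := by
          rw [← Finset.sdiff_union_self_eq_union, Finset.sum_union Finset.sdiff_disjoint]
      _ = ∑ p ∈ (T \ prm K x).filter isP, tau h p + ∑ p ∈ prm K x, tau h p := by
          congr 1
          rw [Finset.sum_filter]
          refine Finset.sum_congr rfl fun p _ => ?_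
          split_ifs with h1
          · rfl
          · exact if_neg h1
      _ ≤ 2 * (B * x ^ (1 - (h : ℝ))) + ∑ p ∈ prm K x, tau h p := by
          apply add_le_add_left
          have h1 := hb x hx ((T \ prm K x).filter isP) (by
            intro p hp
            rw [Finset.mem_filter, Finset.mem_sdiff, mem_prm] at hp
            refine ⟨hp.2.2, ?_⟩
            by_contra h2
            exact hp.1.2 ⟨hp.2, not_lt.mp h2⟩)
          refine le_trans ?_ (mul_le_mul_of_nonneg_left h1 (by norm_num))
          rw [Finset.mul_sum]
          apply Finset.sum_le_sum
          intro p hp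
          exact tau_le h hh (Finset.mem_filter.mp hp).2
      _ = _ := add_comm _ _
  have hsum : Summable (fun p : Ideal (𝓞 K) => tau h p) :=
    summable_of_sum_le (fun p => tau_nonneg h hh p) (key 1 one_pos)
  refine ⟨2 * B, by positivity, fun x hx => ?_⟩
  have hx0 : 0 < x := by linarith
  have hlx : 0 < Real.log x := Real.log_pos (by linarith)
  have h1 := hsum.sum_le_tsum (prm K x) (fun p _ => tau_nonneg h hh p)
  have h2 := hsum.tsum_le_of_sum_le (key x hx0)
  have h3 : x ^ (1 - (h : ℝ)) ≤ (Real.log x)⁻¹ := by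
    calc x ^ (1 - (h : ℝ)) ≤ x ^ (-1 : ℝ) :=
          Real.rpow_le_rpow_of_exponent_le (by linarith) (by linarith)
      _ = x⁻¹ := Real.rpow_neg_one x
      _ ≤ _ := by
          apply inv_anti₀ hlx
          exact (Real.log_le_sub_one_of_pos hx0).trans (by linarith)
  have h4 : B * x ^ (1 - (h : ℝ)) ≤ B * (Real.log x)⁻¹ := by gcongr
  rw [abs_of_nonneg (by linarith), div_eq_mul_inv]
  linarith

variable (K) in
lemma final_bound (h : ℕ) (hh : 2 ≤ h) (A : ℝ)
    (hA : Tendsto (fun x => ∑ p ∈ prm K x, 1 / nm p - Real.log (Real.log x)) atTop (𝓝 A)) :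
    ∃ C : ℝ, ∀ x : ℝ, 2 ≤ x → |∑ p ∈ prm K x, DD h p x -
      kapM K / zt K h * (x * Real.log (Real.log x)) -
      kapM K * (A - ∑' p : Ideal (𝓞 K), tau h p) / zt K h * x| ≤ C * (x / Real.log x) := by
  obtain ⟨C, δ, hC, hδ, hδ2, hcnt⟩ := idl_count K
  obtain ⟨D, hD, hq⟩ := Qf_bound K h hh C δ hC hδ hδ2 hcnt
  obtain ⟨C1, hC1, h1⟩ := mertens2 A hA
  obtain ⟨C2, hC2, h2⟩ := prime_err K δ hδ hδ2
  obtain ⟨C3, hC3, h3⟩ := tau_sum K h hh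
  have hz := zt_ge_one K h hh
  have hk := kapM_pos K
  set c := kapM K / zt K h with hc
  have hc0 : 0 ≤ c := by positivity
  have h2lt : (2 : ℝ) ^ (-(1 - δ)) < 1 :=
    Real.rpow_lt_one_of_one_lt_of_neg (by norm_num) (by linarith)
  have h2p : 0 < 1 - (2 : ℝ) ^ (-(1 - δ)) := by linarith
  set M := 2 * (2 * c + D / (1 - 2 ^ (-(1 - δ)))) with hM
  have hM0 : 0 ≤ M := by positivity
  set T := ∑' p : Ideal (𝓞 K), tau h p with hT
  refine ⟨M * C2 + c * (C1 + C3), fun x hx2 => ?_⟩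
  have hx : 0 < x := by linarith
  have s1 : |∑ p ∈ prm K x, DD h p x - c * x * (∑ p ∈ prm K x, 1 / nm p - ∑ p ∈ prm K x, tau h p)|
      ≤ M * (C2 * (x / Real.log x)) := by
    rw [← Finset.sum_sub_distrib, Finset.mul_sum, ← Finset.sum_sub_distrib]
    refine (Finset.abs_sum_le_sum_abs _ _).trans ?_
    refine le_trans ?_ (mul_le_mul_of_nonneg_left (h2 x hx2) hM0)
    rw [Finset.mul_sum]
    apply Finset.sum_le_sum
    intro p hp
    rw [mem_prm] at hp
    unfold tau
    rw [if_pos hp.1]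
    exact DD_bound h hh c D δ hc0 hD hδ hδ2 hq hp.1 x hx
  have s2 := h1 x hx2
  have s3 := h3 x hx2
  set S1 := ∑ p ∈ prm K x, 1 / nm p
  set S2 := ∑ p ∈ prm K x, tau h p
  have e : ∑ p ∈ prm K x, DD h p x - c * (x * Real.log (Real.log x)) -
      kapM K * (A - T) / zt K h * x = (∑ p ∈ prm K x, DD h p x - c * x * (S1 - S2)) +
      c * x * ((S1 - Real.log (Real.log x) - A) + (T - S2)) := by
    rw [hc]; ring
  rw [e]
  refine (abs_add_le _ _).trans ?_
  rw [abs_mul (c * x), abs_of_nonneg (by positivity : 0 ≤ c * x)]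
  have s4 := (abs_add_le (S1 - Real.log (Real.log x) - A) (T - S2)).trans (add_le_add s2 s3)
  have s5 := mul_le_mul_of_nonneg_left s4 (by positivity : 0 ≤ c * x)
  have e5 : c * x * (C1 / Real.log x + C3 / Real.log x) = c * (C1 + C3) * (x / Real.log x) := by ring
  rw [e5] at s5
  linarith

end
end

section
variable {K : Type*} [Field K] [NumberField K]

lemma kappaK_eq : kappaK K = kapM K := by
  unfold kappaK kapM
  ring

lemma zetaK_eq (h : ℕ) (hh : 2 ≤ h) : zetaK K h = zt K h := by
  unfold zetaK zt
  have e : (fun I : {I : Ideal (𝓞 K) // I ≠ ⊥} => 1 / (Ideal.absNorm I.val : ℝ) ^ h) =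
      fun I : {I : Ideal (𝓞 K) // I ≠ ⊥} => (fun J : Ideal (𝓞 K) => (nm J ^ h)⁻¹) I.val := by
    funext I
    rw [one_div]
    rfl
  rw [e]
  apply tsum_subtype_eq_of_support_subset (s := {I : Ideal (𝓞 K) | I ≠ ⊥})
    (f := fun J : Ideal (𝓞 K) => (nm J ^ h)⁻¹)
  intro I hI h0
  apply hI
  simp only
  rw [h0, nm_bot, zero_pow (by omega), inv_zero]

lemma C1K_eq (h : ℕ) (A : ℝ) : C1K K h A = A - ∑' p : Ideal (𝓞 K), tau h p := by
  unfold C1K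
  congr 1
  have e : (fun p : {p : Ideal (𝓞 K) // p.IsPrime ∧ p ≠ ⊥} => ((Ideal.absNorm p.val : ℝ) - 1) /
      ((Ideal.absNorm p.val : ℝ) * ((Ideal.absNorm p.val : ℝ) ^ h - 1))) =
      fun p : {p : Ideal (𝓞 K) // p.IsPrime ∧ p ≠ ⊥} => tau h p.val := by
    funext p
    unfold tau
    rw [if_pos (show isP p.val from p.2)]
    rfl
  rw [e]
  apply tsum_subtype_eq_of_support_subset (s := {p : Ideal (𝓞 K) | p.IsPrime ∧ p ≠ ⊥})
    (f := fun p : Ideal (𝓞 K) => tau h p)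
  intro p hp
  by_contra h0
  exact hp (if_neg h0)

lemma mertens_eq (x : ℝ) :
    (∑ᶠ p ∈ {p : Ideal (𝓞 K) | p.IsPrime ∧ p ≠ ⊥ ∧ (Ideal.absNorm p : ℝ) ≤ x},
        1 / (Ideal.absNorm p : ℝ)) = ∑ p ∈ prm K x, 1 / nm p := by
  have e : {p : Ideal (𝓞 K) | p.IsPrime ∧ p ≠ ⊥ ∧ (Ideal.absNorm p : ℝ) ≤ x} = (prm K x : Set _) := by
    ext p
    rw [Finset.mem_coe, mem_prm]
    exact (and_assoc).symm
  rw [e, finsum_mem_coe_finset]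
  rfl

open scoped Classical in
lemma omega_eq {x : ℝ} {I : Ideal (𝓞 K)} (hI : I ∈ idl K x) :
    (omegaK I : ℝ) = ∑ p ∈ prm K x, if p ∣ I then (1 : ℝ) else 0 := by
  rw [mem_idl] at hI
  rw [← Finset.sum_filter, Finset.sum_const, nsmul_eq_mul, mul_one]
  unfold omegaK
  rw [← Set.ncard_coe_finset]
  congr 2
  ext p
  rw [Finset.coe_filter, Set.mem_setOf_eq, Set.mem_setOf_eq, mem_prm]
  constructor
  · rintro ⟨h1, h2, h3⟩
    exact ⟨⟨⟨h1, h2⟩, (nm_le_of_dvd hI.1 h3).trans hI.2⟩, h3⟩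
  · rintro ⟨⟨⟨h1, h2⟩, _⟩, h3⟩
    exact ⟨h1, h2, h3⟩

lemma lhs_eq (h : ℕ) (x : ℝ) :
    (∑ᶠ I ∈ {I : Ideal (𝓞 K) | I ≠ ⊥ ∧ HFreeI h I ∧ (Ideal.absNorm I : ℝ) ≤ x},
      (omegaK I : ℝ)) = ∑ p ∈ prm K x, DD h p x := by
  classical
  have e : {I : Ideal (𝓞 K) | I ≠ ⊥ ∧ HFreeI h I ∧ (Ideal.absNorm I : ℝ) ≤ x} =
      ((idl K x).filter (fun I => HFreeI h I) : Set _) := by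
    ext I
    rw [Finset.coe_filter, Set.mem_setOf_eq, Set.mem_setOf_eq, mem_idl]
    unfold nm
    tauto
  rw [e, finsum_mem_coe_finset, Finset.sum_filter]
  unfold DD
  rw [Finset.sum_comm]
  refine Finset.sum_congr rfl fun I hI => ?_
  have e2 : (∀ p : Ideal (𝓞 K), isP p → ¬ p ^ h ∣ I) ↔ HFreeI h I := by
    unfold HFreeI isP
    exact forall_congr' fun p => and_imp
  unfold indF
  by_cases h1 : HFreeI h I
  · simp only [if_pos h1, if_pos (e2.mpr h1)]
    exact omega_eq hI
  · simp only [if_neg h1, if_neg (fun h' => h1 (e2.mp h')), ite_self, Finset.sum_const_zero]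

end

/-- First moment of `ω` over `h`-free ideals of a number field. -/
theorem first_moment_omega_hfree_ideals (K : Type*) [Field K] [NumberField K]
    (h : ℕ) (hh : 2 ≤ h) (A : ℝ) (hA : MertensK K A) :
    (fun x : ℝ =>
        (∑ᶠ I ∈ {I : Ideal (𝓞 K) | I ≠ ⊥ ∧ HFreeI h I ∧ (Ideal.absNorm I : ℝ) ≤ x},
            (omegaK I : ℝ))
          - kappaK K / zetaK K h * (x * Real.log (Real.log x))
          - kappaK K * C1K K h A / zetaK K h * x)
      =O[atTop] fun x : ℝ => x / Real.log x := by
  have hA' : Tendsto (fun x => ∑ p ∈ prm K x, 1 / nm p - Real.log (Real.log x)) atTop (𝓝 A) := by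
    have h1 := hA
    unfold MertensK at h1
    simp only [mertens_eq] at h1
    exact h1
  obtain ⟨C, hC⟩ := final_bound K h hh A hA'
  simp only [lhs_eq, kappaK_eq, zetaK_eq h hh, C1K_eq]
  refine IsBigO.of_bound C ?_
  filter_upwards [eventually_ge_atTop 2] with x hx
  rw [Real.norm_eq_abs, Real.norm_eq_abs]
  have hlx : 0 < Real.log x := Real.log_pos (by linarith)
  rw [abs_of_nonneg (div_nonneg (by linarith) hlx.le)]
  exact hC x hx
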